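/- arXiv:2108.08147 — 5 statements merged into one kernel-verified Lean document; each statement's English description precedes it below -/
import Mathlib

section
/- Stability of the fully discrete bulk–surface Lie splitting (Lemma 4.2, linear case): Assume the weak CFL condition 7 c_inv c_M τ < 3 h. Then for every n ≥ 0 the iterates of the Lie splitting scheme satisfy ‖u^{n+1}‖_A² + ‖p^{n+1}‖_{A_Γ}² + τ · Σ_{k=0}^{n} (1 − 4 c_M h − c_{α,M} τ h − c_A τ h⁻¹) ‖∂_τ p^{k+1}‖_{M_Γ}² ≤ ‖u⁰‖_A² + ‖p⁰‖_{A_Γ}² + 2τ ‖∂_τ p⁰‖_{M₂₂}² + τ · Σ_{k=0}^{n} ( ‖f_Ω^{k+1}‖_{M⁻¹}² + ‖f_Γ^{k+1}‖_{M_Γ⁻¹}² ). -/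
open Matrix Finset

/-- The squared "energy" norm `‖x‖_S² = xᵀ S x` induced by a matrix `S`. -/
noncomputable def vecNormSq {ι : Type*} [Fintype ι] (S : Matrix ι ι ℝ) (x : ι → ℝ) : ℝ :=
  x ⬝ᵥ S.mulVec x


lemma lss_symm {m n : Type*} [Fintype m] [Fintype n] (S : Matrix m n ℝ) (x : n → ℝ) (y : m → ℝ) :
    x ⬝ᵥ Sᵀ.mulVec y = y ⬝ᵥ S.mulVec x := by
  rw [Matrix.mulVec_transpose, Matrix.dotProduct_mulVec, dotProduct_comm]

lemma lss_nonneg {n : Type*} [Fintype n] {S : Matrix n n ℝ} (hS : S.PosSemidef) (x : n → ℝ) :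
    0 ≤ x ⬝ᵥ S.mulVec x := by
  simpa using hS.dotProduct_mulVec_nonneg x

lemma lss_transpose {n : Type*} {S : Matrix n n ℝ} (hS : S.IsHermitian) : Sᵀ = S := by
  simpa [Matrix.IsHermitian, Matrix.conjTranspose_eq_transpose_of_trivial] using hS

lemma lss_young {n : Type*} [Fintype n] [DecidableEq n] {S : Matrix n n ℝ} (hS : S.PosDef)
    (w f : n → ℝ) :
    2 * (w ⬝ᵥ f) ≤ w ⬝ᵥ S.mulVec w + f ⬝ᵥ S⁻¹.mulVec f := by
  have h0 := lss_nonneg hS.posSemidef (w - S⁻¹.mulVec f)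
  have hu : IsUnit S.det := hS.det_pos.ne'.isUnit
  have h1 : S.mulVec (S⁻¹.mulVec f) = f := by
    rw [Matrix.mulVec_mulVec, Matrix.mul_nonsing_inv _ hu, Matrix.one_mulVec]
  have h2 := lss_symm S (S⁻¹.mulVec f) w
  rw [lss_transpose hS.1] at h2
  rw [Matrix.mulVec_sub, h1, dotProduct_sub, sub_dotProduct, sub_dotProduct, h2, h1,
    dotProduct_comm (S⁻¹.mulVec f) f] at h0
  linarith

lemma lss_block {N₁ N₂ : ℕ} (A : Matrix (Fin N₁) (Fin N₁) ℝ) (B : Matrix (Fin N₁) (Fin N₂) ℝ)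
    (D : Matrix (Fin N₂) (Fin N₂) ℝ) (x : Fin N₁ → ℝ) (y : Fin N₂ → ℝ) :
    Sum.elim x y ⬝ᵥ (Matrix.fromBlocks A B Bᵀ D).mulVec (Sum.elim x y)
      = x ⬝ᵥ A.mulVec x + 2 * (x ⬝ᵥ B.mulVec y) + y ⬝ᵥ D.mulVec y := by
  rw [Matrix.fromBlocks_mulVec, sumElim_dotProduct_sumElim]
  simp only [Sum.elim_comp_inl, Sum.elim_comp_inr, dotProduct_add, lss_symm]
  ring

lemma lss_step {N₁ N₂ : ℕ}
    (M₁₁ A₁₁ : Matrix (Fin N₁) (Fin N₁) ℝ)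
    (M₁₂ A₁₂ : Matrix (Fin N₁) (Fin N₂) ℝ)
    (M₂₂ A₂₂ MΓ AΓ : Matrix (Fin N₂) (Fin N₂) ℝ)
    (hM : (Matrix.fromBlocks M₁₁ M₁₂ M₁₂ᵀ M₂₂).PosDef)
    (hA : (Matrix.fromBlocks A₁₁ A₁₂ A₁₂ᵀ A₂₂).PosSemidef)
    (hMΓ : MΓ.PosDef) (hAΓ : AΓ.PosSemidef)
    (τ : ℝ) (hτ : 0 < τ)
    (u d f₁ : Fin N₁ → ℝ) (p q q' f₂ fΓ : Fin N₂ → ℝ)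
    (h₁ : M₁₁.mulVec d + A₁₁.mulVec (u + τ • d) = f₁ - M₁₂.mulVec q - A₁₂.mulVec p)
    (h₂ : MΓ.mulVec q' + AΓ.mulVec (p + τ • q') = fΓ + f₂ - M₂₂.mulVec q - A₂₂.mulVec p
          - M₁₂ᵀ.mulVec d - A₁₂ᵀ.mulVec (u + τ • d)) :
    vecNormSq (Matrix.fromBlocks A₁₁ A₁₂ A₁₂ᵀ A₂₂) (Sum.elim (u + τ • d) (p + τ • q'))
      + vecNormSq AΓ (p + τ • q') + τ * vecNormSq MΓ q'
    ≤ vecNormSq (Matrix.fromBlocks A₁₁ A₁₂ A₁₂ᵀ A₂₂) (Sum.elim u p)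
      + vecNormSq AΓ p + τ * (τ * vecNormSq A₂₂ q')
      + τ * (2 * vecNormSq M₂₂ q' + 2 * vecNormSq M₂₂ q)
      + τ * (vecNormSq (Matrix.fromBlocks M₁₁ M₁₂ M₁₂ᵀ M₂₂)⁻¹ (Sum.elim f₁ f₂)
          + vecNormSq MΓ⁻¹ fΓ) := by
  have yM := lss_young hM (Sum.elim d q') (Sum.elim f₁ f₂)
  have yΓ := lss_young hMΓ q' fΓ
  have n1 := lss_nonneg hM.posSemidef (Sum.elim d (q' - (q' - q)))
  have n2 := lss_nonneg hM.posSemidef (Sum.elim 0 (q' + q))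
  have n3 := lss_nonneg hA (Sum.elim d 0)
  have n4 := lss_nonneg hAΓ q'
  have tA := lss_transpose hA.1
  have tM := lss_transpose hM.1
  rw [Matrix.fromBlocks_transpose, Matrix.fromBlocks_inj] at tA tM
  obtain ⟨tA1, -, -, tA2⟩ := tA
  obtain ⟨tM1, -, -, tM2⟩ := tM
  have tG := lss_transpose hAΓ.1
  have s1 := lss_symm A₁₁ d u
  have s2 := lss_symm A₂₂ q' p
  have s3 := lss_symm M₂₂ q' q
  have s4 := lss_symm AΓ q' p
  rw [tA1] at s1
  rw [tA2] at s2
  rw [tM2] at s3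
  rw [tG] at s4
  have e1 := congrArg (fun z => d ⬝ᵥ z) h₁
  have e2 := congrArg (fun z => q' ⬝ᵥ z) h₂
  unfold vecNormSq
  rw [lss_block, sumElim_dotProduct_sumElim] at yM
  rw [lss_block] at n1 n2 n3
  rw [lss_block, lss_block]
  simp only [Matrix.mulVec_add, Matrix.mulVec_smul, Matrix.mulVec_sub, dotProduct_add, sub_dotProduct,
    dotProduct_sub, add_dotProduct, smul_dotProduct, dotProduct_smul, lss_symm, smul_eq_mul,
    zero_dotProduct, Matrix.mulVec_zero, dotProduct_zero, s1, s2, s3, s4] at *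
  have k1 := mul_le_mul_of_nonneg_left yM hτ.le
  have k2 := mul_le_mul_of_nonneg_left yΓ hτ.le
  have k3 := mul_nonneg hτ.le n1
  have k4 := mul_nonneg hτ.le n2
  have k5 := mul_nonneg (mul_nonneg hτ.le hτ.le) n3
  have k7 := congrArg (fun z => 2 * τ * z) e1
  have k8 := congrArg (fun z => 2 * τ * z) e2
  nlinarith [k1, k2, k3, k4, k5, k7, k8]

/-- **Stability of the fully discrete bulk–surface Lie splitting (Lemma 4.2, linear case).**
Under the weak CFL condition `7 c_inv c_M τ < 3 h`, the iterates of the Lie splitting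
scheme satisfy the discrete energy estimate. -/
theorem lie_splitting_stability
    (N₁ N₂ : ℕ) (hN₁ : 0 < N₁) (hN₂ : 0 < N₂)
    (M₁₁ A₁₁ : Matrix (Fin N₁) (Fin N₁) ℝ)
    (M₁₂ A₁₂ : Matrix (Fin N₁) (Fin N₂) ℝ)
    (M₂₁ A₂₁ : Matrix (Fin N₂) (Fin N₁) ℝ)
    (M₂₂ A₂₂ MΓ AΓ : Matrix (Fin N₂) (Fin N₂) ℝ)
    (hM : (Matrix.fromBlocks M₁₁ M₁₂ M₂₁ M₂₂).PosDef)
    (hA : (Matrix.fromBlocks A₁₁ A₁₂ A₂₁ A₂₂).PosSemidef)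
    (hM21 : M₂₁ = M₁₂ᵀ) (hA21 : A₂₁ = A₁₂ᵀ)
    (hMΓ : MΓ.PosDef) (hAΓ : AΓ.PosSemidef)
    -- constants
    (τ h cM cinv αΩ : ℝ)
    (hτ : 0 < τ) (hh : 0 < h) (hcM : 0 < cM) (hcinv : 0 < cinv) (hαΩ : 0 ≤ αΩ)
    -- boundary mass estimate
    (hmass : ∀ z : Fin N₂ → ℝ, vecNormSq M₂₂ z ≤ cM * h * vecNormSq MΓ z)
    -- inverse estimate
    (hinv : ∀ z : Fin N₂ → ℝ, vecNormSq A₂₂ z ≤ (αΩ + cinv / h ^ 2) * vecNormSq M₂₂ z)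
    -- weak CFL condition
    (hCFL : 7 * cinv * cM * τ < 3 * h)
    -- the discrete sequences and data
    (u₁ f₁ : ℕ → Fin N₁ → ℝ) (p dtp f₂ fΓ : ℕ → Fin N₂ → ℝ)
    -- discrete time derivative of p (with dtp 0 the prescribed initial value ∂_τ p⁰)
    (hdtp : ∀ n : ℕ, dtp (n + 1) = τ⁻¹ • (p (n + 1) - p n))
    -- the bulk step of the Lie splitting scheme
    (hscheme₁ : ∀ n : ℕ,
      M₁₁.mulVec (τ⁻¹ • (u₁ (n + 1) - u₁ n)) + A₁₁.mulVec (u₁ (n + 1)) =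
        f₁ (n + 1) - M₁₂.mulVec (dtp n) - A₁₂.mulVec (p n))
    -- the surface step of the Lie splitting scheme
    (hscheme₂ : ∀ n : ℕ,
      MΓ.mulVec (dtp (n + 1)) + AΓ.mulVec (p (n + 1)) =
        fΓ (n + 1) + f₂ (n + 1) - M₂₂.mulVec (dtp n) - A₂₂.mulVec (p n)
          - M₂₁.mulVec (τ⁻¹ • (u₁ (n + 1) - u₁ n)) - A₂₁.mulVec (u₁ (n + 1))) :
    ∀ n : ℕ,
      vecNormSq (Matrix.fromBlocks A₁₁ A₁₂ A₂₁ A₂₂) (Sum.elim (u₁ (n + 1)) (p (n + 1)))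
        + vecNormSq AΓ (p (n + 1))
        + τ * ∑ k ∈ Finset.range (n + 1),
            (1 - 4 * cM * h - (cM * αΩ) * τ * h - (cM * cinv) * τ / h)
              * vecNormSq MΓ (dtp (k + 1))
      ≤ vecNormSq (Matrix.fromBlocks A₁₁ A₁₂ A₂₁ A₂₂) (Sum.elim (u₁ 0) (p 0))
        + vecNormSq AΓ (p 0)
        + 2 * τ * vecNormSq M₂₂ (dtp 0)
        + τ * ∑ k ∈ Finset.range (n + 1),
            (vecNormSq (Matrix.fromBlocks M₁₁ M₁₂ M₂₁ M₂₂)⁻¹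
                (Sum.elim (f₁ (k + 1)) (f₂ (k + 1)))
              + vecNormSq MΓ⁻¹ (fΓ (k + 1))) := by
  subst hM21 hA21
  have step : ∀ k : ℕ, _ := fun k => lss_step M₁₁ A₁₁ M₁₂ A₁₂ M₂₂ A₂₂ MΓ AΓ hM hA hMΓ hAΓ τ hτ
    (u₁ k) (τ⁻¹ • (u₁ (k + 1) - u₁ k)) (f₁ (k + 1)) (p k) (dtp k) (dtp (k + 1)) (f₂ (k + 1))
    (fΓ (k + 1))
  have hu : ∀ k, u₁ k + τ • (τ⁻¹ • (u₁ (k + 1) - u₁ k)) = u₁ (k + 1) := by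
    intro k
    rw [smul_smul, mul_inv_cancel₀ hτ.ne', one_smul]
    abel
  have hp : ∀ k, p k + τ • dtp (k + 1) = p (k + 1) := by
    intro k
    rw [hdtp, smul_smul, mul_inv_cancel₀ hτ.ne', one_smul]
    abel
  simp only [hu, hp] at step
  have step' := fun k => step k (hscheme₁ k) (hscheme₂ k)
  clear step
  have hAbd : ∀ z, τ * vecNormSq A₂₂ z
      ≤ ((cM * αΩ) * τ * h + (cM * cinv) * τ / h) * vecNormSq MΓ z := by
    intro z
    have h1 := hinv z
    have h2 := mul_le_mul_of_nonneg_left (hmass z)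
      (show 0 ≤ αΩ + cinv / h ^ 2 by positivity)
    have h3 := mul_le_mul_of_nonneg_left (h1.trans h2) hτ.le
    refine h3.trans (le_of_eq ?_)
    field_simp
  -- strengthened induction
  have key : ∀ n : ℕ,
      vecNormSq (Matrix.fromBlocks A₁₁ A₁₂ A₁₂ᵀ A₂₂) (Sum.elim (u₁ n) (p n))
        + vecNormSq AΓ (p n) + 2 * τ * vecNormSq M₂₂ (dtp n)
        + τ * ∑ k ∈ Finset.range n,
            (1 - 4 * cM * h - (cM * αΩ) * τ * h - (cM * cinv) * τ / h)
              * vecNormSq MΓ (dtp (k + 1))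
      ≤ vecNormSq (Matrix.fromBlocks A₁₁ A₁₂ A₁₂ᵀ A₂₂) (Sum.elim (u₁ 0) (p 0))
        + vecNormSq AΓ (p 0)
        + 2 * τ * vecNormSq M₂₂ (dtp 0)
        + τ * ∑ k ∈ Finset.range n,
            (vecNormSq (Matrix.fromBlocks M₁₁ M₁₂ M₁₂ᵀ M₂₂)⁻¹
                (Sum.elim (f₁ (k + 1)) (f₂ (k + 1)))
              + vecNormSq MΓ⁻¹ (fΓ (k + 1))) := by
    intro n
    induction n with
    | zero => simp
    | succ n ih =>
      rw [Finset.sum_range_succ, Finset.sum_range_succ, mul_add, mul_add]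
      have a1 := step' n
      have a2 := mul_le_mul_of_nonneg_left (hAbd (dtp (n + 1))) hτ.le
      have a3 := mul_le_mul_of_nonneg_left (hmass (dtp (n + 1))) hτ.le
      linarith
  intro n
  have hk := key (n + 1)
  have hnn : 0 ≤ vecNormSq M₂₂ (dtp (n + 1)) := by
    have := lss_nonneg hM.posSemidef (Sum.elim 0 (dtp (n + 1)))
    rw [lss_block] at this
    simpa [vecNormSq] using this
  have := mul_nonneg hτ.le hnn
  linarith
end

section
/- Local error of the first Lie splitting step (Lemma 4.3, linear case): Assume the weak CFL condition 7 c_inv c_M τ < 3 h and consistent initial data with ∂_τ p⁰ = ṗ(0). Then ‖u¹ − u⁰‖_A² + ‖p¹ − p⁰‖_{A_Γ}² + τ (1 − c_M h − 2 c_{α,M} τ h − 2 c_A τ h⁻¹) ‖∂_τ p¹ − ṗ(0)‖_{M_Γ}² ≤ τ² ‖u̇(0)‖_A² + τ² ‖ṗ(0)‖_{A_Γ}² + 2 τ² ‖ṗ(0)‖_{A₂₂}² + τ ‖f_Ω¹ − f_Ω⁰‖_{M⁻¹}² + τ ‖f_Γ¹ − f_Γ⁰‖_{M_Γ⁻¹}².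 -/
open Matrix Finset

theorem vns_comm {ι : Type*} [Fintype ι] {S : Matrix ι ι ℝ} (hS : S.PosSemidef) (x y : ι → ℝ) :
    x ⬝ᵥ S.mulVec y = y ⬝ᵥ S.mulVec x := by
  have h : Sᵀ = S := by have := hS.1; rwa [Matrix.IsHermitian, Matrix.conjTranspose_eq_transpose_of_trivial] at this
  rw [Matrix.dotProduct_mulVec, ← Matrix.mulVec_transpose, h, dotProduct_comm]

theorem vns_nonneg {ι : Type*} [Fintype ι] {S : Matrix ι ι ℝ} (hS : S.PosSemidef) (x : ι → ℝ) :
    0 ≤ vecNormSq S x := by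
  simpa [vecNormSq] using hS.dotProduct_mulVec_nonneg x

theorem vns_smul {ι : Type*} [Fintype ι] (S : Matrix ι ι ℝ) (c : ℝ) (x : ι → ℝ) :
    vecNormSq S (c • x) = c ^ 2 * vecNormSq S x := by
  simp [vecNormSq, Matrix.mulVec_smul]
  ring

theorem vns_comb {ι : Type*} [Fintype ι] {S : Matrix ι ι ℝ} (hS : S.PosSemidef) (a b : ℝ)
    (x y : ι → ℝ) :
    vecNormSq S (a • x + b • y)
      = a ^ 2 * vecNormSq S x + 2 * a * b * (x ⬝ᵥ S.mulVec y) + b ^ 2 * vecNormSq S y := by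
  simp only [vecNormSq, Matrix.mulVec_add, Matrix.mulVec_smul, dotProduct_add, add_dotProduct,
    dotProduct_smul, smul_dotProduct, smul_eq_mul]
  rw [vns_comm hS y x]
  ring

theorem vns_inv {ι : Type*} [Fintype ι] [DecidableEq ι] {S : Matrix ι ι ℝ} (hS : S.PosDef)
    (x g : ι → ℝ) :
    2 * (x ⬝ᵥ g) ≤ vecNormSq S x + vecNormSq S⁻¹ g := by
  have hg : S.mulVec (S⁻¹.mulVec g) = g := by
    rw [Matrix.mulVec_mulVec, Matrix.mul_nonsing_inv _ ((Matrix.isUnit_iff_isUnit_det _).1 hS.isUnit),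
      Matrix.one_mulVec]
  have h1 := vns_nonneg hS.posSemidef ((1:ℝ) • x + (-1:ℝ) • S⁻¹.mulVec g)
  rw [vns_comb hS.posSemidef, hg] at h1
  have h2 : vecNormSq S (S⁻¹.mulVec g) = vecNormSq S⁻¹ g := by
    rw [vecNormSq, hg, vecNormSq, dotProduct_comm]
  linarith

theorem blk_dot {m n : ℕ} (S₁₁ : Matrix (Fin m) (Fin m) ℝ) (S₁₂ : Matrix (Fin m) (Fin n) ℝ)
    (S₂₁ : Matrix (Fin n) (Fin m) ℝ) (S₂₂ : Matrix (Fin n) (Fin n) ℝ)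
    (a c : Fin m → ℝ) (b d : Fin n → ℝ) :
    Sum.elim a b ⬝ᵥ (Matrix.fromBlocks S₁₁ S₁₂ S₂₁ S₂₂).mulVec (Sum.elim c d)
      = a ⬝ᵥ S₁₁.mulVec c + a ⬝ᵥ S₁₂.mulVec d + (b ⬝ᵥ S₂₁.mulVec c + b ⬝ᵥ S₂₂.mulVec d) := by
  rw [Matrix.fromBlocks_mulVec]
  simp [sumElim_dotProduct_sumElim, dotProduct_add]

/-- **Local error of the first Lie splitting step (Lemma 4.3, linear case).**
Under the weak CFL condition and consistent initial data with `∂_τ p⁰ = ṗ(0)`,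
the error of the first step is estimated. -/
theorem lie_splitting_local_error
    (N₁ N₂ : ℕ) (hN₁ : 0 < N₁) (hN₂ : 0 < N₂)
    (M₁₁ A₁₁ : Matrix (Fin N₁) (Fin N₁) ℝ)
    (M₁₂ A₁₂ : Matrix (Fin N₁) (Fin N₂) ℝ)
    (M₂₁ A₂₁ : Matrix (Fin N₂) (Fin N₁) ℝ)
    (M₂₂ A₂₂ MΓ AΓ : Matrix (Fin N₂) (Fin N₂) ℝ)
    (hM : (Matrix.fromBlocks M₁₁ M₁₂ M₂₁ M₂₂).PosDef)
    (hA : (Matrix.fromBlocks A₁₁ A₁₂ A₂₁ A₂₂).PosSemidef)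
    (hM21 : M₂₁ = M₁₂ᵀ) (hA21 : A₂₁ = A₁₂ᵀ)
    (hMΓ : MΓ.PosDef) (hAΓ : AΓ.PosSemidef)
    -- constants
    (τ h cM cinv αΩ : ℝ)
    (hτ : 0 < τ) (hh : 0 < h) (hcM : 0 < cM) (hcinv : 0 < cinv) (hαΩ : 0 ≤ αΩ)
    -- boundary mass estimate
    (hmass : ∀ z : Fin N₂ → ℝ, vecNormSq M₂₂ z ≤ cM * h * vecNormSq MΓ z)
    -- inverse estimate
    (hinv : ∀ z : Fin N₂ → ℝ, vecNormSq A₂₂ z ≤ (αΩ + cinv / h ^ 2) * vecNormSq M₂₂ z)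
    -- weak CFL condition
    (hCFL : 7 * cinv * cM * τ < 3 * h)
    -- the discrete sequences and data
    (u₁ f₁ : ℕ → Fin N₁ → ℝ) (p dtp f₂ fΓ : ℕ → Fin N₂ → ℝ)
    (hdtp : ∀ n : ℕ, dtp (n + 1) = τ⁻¹ • (p (n + 1) - p n))
    (hscheme₁ : ∀ n : ℕ,
      M₁₁.mulVec (τ⁻¹ • (u₁ (n + 1) - u₁ n)) + A₁₁.mulVec (u₁ (n + 1)) =
        f₁ (n + 1) - M₁₂.mulVec (dtp n) - A₁₂.mulVec (p n))
    (hscheme₂ : ∀ n : ℕ,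
      MΓ.mulVec (dtp (n + 1)) + AΓ.mulVec (p (n + 1)) =
        fΓ (n + 1) + f₂ (n + 1) - M₂₂.mulVec (dtp n) - A₂₂.mulVec (p n)
          - M₂₁.mulVec (τ⁻¹ • (u₁ (n + 1) - u₁ n)) - A₂₁.mulVec (u₁ (n + 1)))
    -- consistent initial data: u̇₁(0) and ṗ(0)
    (du₁0 : Fin N₁ → ℝ) (dp0 : Fin N₂ → ℝ)
    (hcons₁ : M₁₁.mulVec du₁0 + M₁₂.mulVec dp0 + A₁₁.mulVec (u₁ 0) + A₁₂.mulVec (p 0) = f₁ 0)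
    (hcons₂ : M₂₁.mulVec du₁0 + (M₂₂ + MΓ).mulVec dp0 + A₂₁.mulVec (u₁ 0)
        + (A₂₂ + AΓ).mulVec (p 0) = f₂ 0 + fΓ 0)
    -- ∂_τ p⁰ = ṗ(0)
    (hinit : dtp 0 = dp0) :
    vecNormSq (Matrix.fromBlocks A₁₁ A₁₂ A₂₁ A₂₂)
        (Sum.elim (u₁ 1) (p 1) - Sum.elim (u₁ 0) (p 0))
      + vecNormSq AΓ (p 1 - p 0)
      + τ * (1 - cM * h - 2 * (cM * αΩ) * τ * h - 2 * (cM * cinv) * τ / h)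
          * vecNormSq MΓ (dtp 1 - dp0)
    ≤ τ ^ 2 * vecNormSq (Matrix.fromBlocks A₁₁ A₁₂ A₂₁ A₂₂) (Sum.elim du₁0 dp0)
      + τ ^ 2 * vecNormSq AΓ dp0
      + 2 * τ ^ 2 * vecNormSq A₂₂ dp0
      + τ * vecNormSq (Matrix.fromBlocks M₁₁ M₁₂ M₂₁ M₂₂)⁻¹
          (Sum.elim (f₁ 1) (f₂ 1) - Sum.elim (f₁ 0) (f₂ 0))
      + τ * vecNormSq MΓ⁻¹ (fΓ 1 - fΓ 0) := by
  have e10 := hscheme₁ 0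
  have e20 := hscheme₂ 0
  have hd := hdtp 0
  rw [hinit] at e10 e20
  simp only [zero_add] at e10 e20 hd
  obtain ⟨d1, hd1⟩ : ∃ d1, d1 = τ⁻¹ • (u₁ 1 - u₁ 0) := ⟨_, rfl⟩
  rw [← hd1] at e10 e20
  have hu1 : u₁ 1 = u₁ 0 + τ • d1 := by
    rw [hd1, smul_smul, mul_inv_cancel₀ hτ.ne', one_smul]; abel
  have hp1 : p 1 = p 0 + τ • dtp 1 := by
    rw [hd, smul_smul, mul_inv_cancel₀ hτ.ne', one_smul]; abel
  obtain ⟨x, hx⟩ : ∃ x, x = d1 - du₁0 := ⟨_, rfl⟩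
  obtain ⟨y, hy⟩ : ∃ y, y = dtp 1 - dp0 := ⟨_, rfl⟩
  have hd1' : d1 = du₁0 + x := by rw [hx]; abel
  have hd2' : dtp 1 = dp0 + y := by rw [hy]; abel
  have i1 : M₁₁.mulVec x + τ • A₁₁.mulVec d1 = f₁ 1 - f₁ 0 := by
    rw [← hcons₁, hx, ← Matrix.mulVec_smul, Matrix.mulVec_sub]
    rw [hu1, Matrix.mulVec_add] at e10
    have := eq_add_of_sub_eq (eq_add_of_sub_eq e10.symm)
    rw [this]; abel
  have i2 : MΓ.mulVec y + τ • AΓ.mulVec (dtp 1) + M₂₁.mulVec x + τ • A₂₁.mulVec d1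
      = (fΓ 1 - fΓ 0) + (f₂ 1 - f₂ 0) := by
    rw [hu1, hp1, Matrix.mulVec_add, Matrix.mulVec_add] at e20
    rw [Matrix.add_mulVec, Matrix.add_mulVec] at hcons₂
    have h3 : (fΓ 1 - fΓ 0) + (f₂ 1 - f₂ 0) = (fΓ 1 + f₂ 1) - (f₂ 0 + fΓ 0) := by abel
    rw [h3, ← hcons₂, hx, hy, ← Matrix.mulVec_smul, ← Matrix.mulVec_smul, Matrix.mulVec_sub,
      Matrix.mulVec_sub]
    have := eq_add_of_sub_eq (eq_add_of_sub_eq (eq_add_of_sub_eq (eq_add_of_sub_eq e20.symm)))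
    rw [this]; abel
  have j1 := congrArg (fun w => x ⬝ᵥ w) i1
  have j2 := congrArg (fun w => y ⬝ᵥ w) i2
  simp only [dotProduct_add, dotProduct_smul, smul_eq_mul] at j1 j2
  obtain ⟨A, hAd⟩ : ∃ A, A = Matrix.fromBlocks A₁₁ A₁₂ A₂₁ A₂₂ := ⟨_, rfl⟩
  obtain ⟨M, hMd⟩ : ∃ M, M = Matrix.fromBlocks M₁₁ M₁₂ M₂₁ M₂₂ := ⟨_, rfl⟩
  have bA : Sum.elim x y ⬝ᵥ A.mulVec (Sum.elim d1 0) = x ⬝ᵥ A₁₁.mulVec d1 + y ⬝ᵥ A₂₁.mulVec d1 := by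
    rw [hAd, blk_dot]; simp
  have bM : Sum.elim x y ⬝ᵥ M.mulVec (Sum.elim x 0) = x ⬝ᵥ M₁₁.mulVec x + y ⬝ᵥ M₂₁.mulVec x := by
    rw [hMd, blk_dot]; simp
  have qA : ∀ z, vecNormSq A (Sum.elim 0 z) = vecNormSq A₂₂ z := by
    intro z; rw [vecNormSq, hAd, blk_dot]; simp [vecNormSq]
  have qM : ∀ z, vecNormSq M (Sum.elim 0 z) = vecNormSq M₂₂ z := by
    intro z; rw [vecNormSq, hMd, blk_dot]; simp [vecNormSq]
  have bg : Sum.elim x y ⬝ᵥ (Sum.elim (f₁ 1) (f₂ 1) - Sum.elim (f₁ 0) (f₂ 0))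
      = x ⬝ᵥ (f₁ 1 - f₁ 0) + y ⬝ᵥ (f₂ 1 - f₂ 0) := by
    rw [dotProduct_sub]; simp only [sumElim_dotProduct_sumElim, dotProduct_sub]; ring
  rw [← hAd] at hA ⊢
  rw [← hMd] at hM ⊢
  have hU : Sum.elim (u₁ 1) (p 1) - Sum.elim (u₁ 0) (p 0) = τ • Sum.elim d1 (dtp 1) := by
    rw [hu1, hp1]; ext i; cases i <;> simp
  have hP : p 1 - p 0 = τ • dtp 1 := by rw [hp1]; abel
  rw [hU, hP, vns_smul, vns_smul, ← hy]
  have k1 := vns_inv hM (Sum.elim x y) (Sum.elim (f₁ 1) (f₂ 1) - Sum.elim (f₁ 0) (f₂ 0))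
  have k2 := vns_inv hMΓ y (fΓ 1 - fΓ 0)
  rw [bg] at k1
  generalize vecNormSq M⁻¹ _ = G at k1 ⊢
  generalize vecNormSq MΓ⁻¹ _ = GΓ at k2 ⊢
  obtain ⟨E, hE⟩ : ∃ E, E = Sum.elim x y := ⟨_, rfl⟩
  obtain ⟨V, hV⟩ : ∃ V, V = Sum.elim du₁0 dp0 := ⟨_, rfl⟩
  obtain ⟨Y, hY⟩ : ∃ Y : Fin N₁ ⊕ Fin N₂ → ℝ, Y = Sum.elim (0 : Fin N₁ → ℝ) y := ⟨_, rfl⟩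
  obtain ⟨W, hW⟩ : ∃ W : Fin N₁ ⊕ Fin N₂ → ℝ, W = Sum.elim (0 : Fin N₁ → ℝ) dp0 := ⟨_, rfl⟩
  have sD : Sum.elim d1 (dtp 1) = (1:ℝ) • E + (1:ℝ) • V := by
    rw [hd1', hd2', hE, hV]; ext i; cases i <;> simp [add_comm]
  have sA : Sum.elim d1 0 = E + V - Y - W := by
    rw [hd1', hE, hV, hY, hW]; ext i; cases i <;> simp [add_comm]
  have sM : Sum.elim x 0 = E - Y := by
    rw [hE, hY]; ext i; cases i <;> simp
  have sΓ : dtp 1 = (1:ℝ) • y + (1:ℝ) • dp0 := by rw [hd2']; simp [add_comm]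
  have qy := qA y
  have qd := qA dp0
  have qm := qM y
  rw [← hY] at qy qm
  rw [← hW] at qd
  rw [← hE] at k1 bA bM
  rw [← hV]
  rw [sA] at bA
  rw [sM] at bM
  simp only [Matrix.mulVec_add, Matrix.mulVec_sub, dotProduct_add, dotProduct_sub] at bA bM
  have n1 := vns_nonneg hA ((1:ℝ) • E + (-2:ℝ) • Y)
  have n2 := vns_nonneg hA ((1:ℝ) • E + (-2:ℝ) • W)
  have n3 := vns_nonneg hM.posSemidef ((1:ℝ) • E + (-1:ℝ) • Y)
  have n4 := vns_nonneg hAΓ y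
  rw [vns_comb hA] at n1 n2
  rw [vns_comb hM.posSemidef] at n3
  rw [sD, vns_comb hA]
  rw [sΓ, Matrix.mulVec_add, Matrix.mulVec_smul, Matrix.mulVec_smul] at j2
  rw [sΓ, vns_comb hAΓ]
  simp only [dotProduct_add, dotProduct_smul, smul_eq_mul] at j2
  have r1 := hmass y
  have r2 := hinv y
  have r3 : vecNormSq A₂₂ y ≤ (αΩ + cinv / h ^ 2) * (cM * h * vecNormSq MΓ y) :=
    r2.trans (mul_le_mul_of_nonneg_left r1 (by positivity))
  have r4 : (αΩ + cinv / h ^ 2) * (cM * h * vecNormSq MΓ y)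
      = (cM * αΩ * h + cM * cinv / h) * vecNormSq MΓ y := by
    field_simp
  rw [r4] at r3
  have r5 : τ * (1 - cM * h - 2 * (cM * αΩ) * τ * h - 2 * (cM * cinv) * τ / h) * vecNormSq MΓ y
      = τ * vecNormSq MΓ y - τ * (cM * h * vecNormSq MΓ y)
        - 2 * τ ^ 2 * ((cM * αΩ * h + cM * cinv / h) * vecNormSq MΓ y) := by
    ring
  rw [r5]
  have t2 : 0 ≤ τ ^ 2 := by positivity
  have m1 := mul_le_mul_of_nonneg_left k1 hτ.le
  have m2 := mul_le_mul_of_nonneg_left k2 hτ.le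
  have m3 := mul_le_mul_of_nonneg_left r1 hτ.le
  have m4 := mul_le_mul_of_nonneg_left r3 t2
  have m5 := mul_nonneg t2 n1
  have m6 := mul_nonneg t2 n2
  have m7 := mul_nonneg hτ.le n3
  have m8 := mul_nonneg t2 n4
  have J : τ * (x ⬝ᵥ M₁₁.mulVec x + y ⬝ᵥ M₂₁.mulVec x) + τ * vecNormSq MΓ y
      + τ ^ 2 * (x ⬝ᵥ A₁₁.mulVec d1 + y ⬝ᵥ A₂₁.mulVec d1)
      + τ ^ 2 * (vecNormSq AΓ y + y ⬝ᵥ AΓ.mulVec dp0)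
      = τ * (x ⬝ᵥ (f₁ 1 - f₁ 0) + y ⬝ᵥ (f₂ 1 - f₂ 0)) + τ * (y ⬝ᵥ (fΓ 1 - fΓ 0)) := by
    simp only [vecNormSq]
    linear_combination τ * j1 + τ * j2
  rw [← bA, ← bM] at J
  have vE : vecNormSq A E = E ⬝ᵥ A.mulVec E := rfl
  have vM : vecNormSq M E = E ⬝ᵥ M.mulVec E := rfl
  rw [← vE, ← vM] at J
  rw [qy] at m5
  rw [qd] at m6
  rw [qm] at m7
  linarith
end

section
/- Second-difference estimate for the Lie splitting (inequality (4.9) in the proof of Theorem 4.4): Assume the weak CFL condition 7 c_inv c_M τ < 3 h, consistent initial data with ∂_τ p⁰ = ṗ(0), and that 1 − c_M h − 2 c_{α,M} τ h − 2 c_A τ h⁻¹ > 0. Then for every n ≥ 1: τ Σ_{k=1}^{n} (1 − 4 c_M h − c_{α,M} τ h − c_A τ h⁻¹) ‖∂_τ p^{k+1} − ∂_τ p^{k}‖_{M_Γ}² ≤ ((1 + c_M h − 2 c_{α,M} τ h − 2 c_A τ h⁻¹)/(1 − c_M h − 2 c_{α,M} τ h − 2 c_A τ h⁻¹)) · ( τ²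 ‖u̇(0)‖_A² + τ² ‖ṗ(0)‖_{A_Γ}² + τ² ‖ṗ(0)‖_{A₂₂}² + τ Σ_{k=0}^{n} ( ‖f_Ω^{k+1} − f_Ω^{k}‖_{M⁻¹}² + ‖f_Γ^{k+1} − f_Γ^{k}‖_{M_Γ⁻¹}² ) ). -/
open Matrix Finset

theorem disc_pos (m : ℝ) (h0 : 0 ≤ m) (h1 : m ≤ 33/200) :
  0 ≤ 9/64 + (-33/256)*m + (1049/32)*m^2 + (-3551/16)*m^3 + (-475)*m^4 + 2273*m^5 + 11016*m^6 - 55056*m^7 + 78336*m^8 - 36864*m^9 := by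
  have h2 : 0 ≤ 33/200 - m := by linarith
  nlinarith [pow_nonneg h0 2, pow_nonneg h0 3, mul_nonneg (pow_nonneg h0 2) h2, mul_nonneg (pow_nonneg h0 3) h2, mul_nonneg (pow_nonneg h0 4) h2, mul_nonneg (pow_nonneg h0 5) h2, mul_nonneg (pow_nonneg h0 6) h2, mul_nonneg (pow_nonneg h0 7) h2, mul_nonneg (pow_nonneg h0 8) h2, pow_nonneg h0 4, pow_nonneg h0 5, pow_nonneg h0 6, pow_nonneg h0 7, pow_nonneg h0 8,pow_nonneg h0 9]

theorem Gc0_pos (m : ℝ) (h0 : 33/200 ≤ m) (h1 : m ≤ 1/4) :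
  0 ≤ (3/16*m - 5/8*m^2+31/2*m^3-146*m^4+312*m^5-192*m^6) + (-27/16*m+51/4*m^2-77*m^3+228*m^4-192*m^5)*(7*m-1) + (3/16+17/4*m-15*m^2+12*m^3)*(7*m-1)^2 := by
  obtain ⟨t, rfl⟩ : ∃ t, m = 33/200 + t := ⟨m - 33/200, by ring⟩
  have ht : 0 ≤ t := by linarith
  have ht2 : 0 ≤ 17/200 - t := by linarith
  nlinarith [pow_nonneg ht 2, pow_nonneg ht 3, pow_nonneg ht 4, pow_nonneg ht 5, pow_nonneg ht 6, mul_nonneg ht ht2, mul_nonneg (pow_nonneg ht 2) ht2, mul_nonneg (pow_nonneg ht 3) ht2, mul_nonneg (pow_nonneg ht 4) ht2, mul_nonneg (pow_nonneg ht 5) ht2, sq_nonneg (t - 1/50)]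

theorem slope_pos (m : ℝ) (h0 : 33/200 ≤ m) (h1 : m ≤ 1/4) :
  0 ≤ (-27/16*m+51/4*m^2-77*m^3+228*m^4-192*m^5) + 2*(3/16+17/4*m-15*m^2+12*m^3)*(7*m-1) := by
  obtain ⟨t, rfl⟩ : ∃ t, m = 33/200 + t := ⟨m - 33/200, by ring⟩
  have ht : 0 ≤ t := by linarith
  have ht2 : 0 ≤ 17/200 - t := by linarith
  nlinarith [pow_nonneg ht 2, pow_nonneg ht 3, pow_nonneg ht 4, pow_nonneg ht 5, pow_nonneg ht 6, mul_nonneg ht ht2, mul_nonneg (pow_nonneg ht 2) ht2, mul_nonneg (pow_nonneg ht 3) ht2, mul_nonneg (pow_nonneg ht 4) ht2]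

theorem g2_pos (m : ℝ) (h0 : 0 ≤ m) (h1 : m ≤ 1/4) : 0 < 3/16+17/4*m-15*m^2+12*m^3 := by
  have : 0 ≤ m * (1/4-m) := mul_nonneg h0 (by linarith)
  nlinarith [pow_nonneg h0 3]

theorem G_pos (m x θ q c : ℝ) (hm : 0 < m) (hx : 0 < x) (hθ : θ = 1/2 - 2*m) (hq : q = 1 - 3*θ^2)
    (hcc : c = 1 - m - 2*x) (hc : 0 < c) (h4 : 4*m + x < 1) :
    0 ≤ (2*m*(1+θ) + 2*θ*c) * ((q*(1-3*m) - 9*θ^2*m)*(1-θ^2) - q*x) - q*x*c*(1-θ) := by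
  have hx' : x = (1 - m - c)/2 := by linarith
  set g0 := 3/16 - 5/8*m+31/2*m^2-146*m^3+312*m^4-192*m^5 with hg0
  set g1 := -27/16+51/4*m-77*m^2+228*m^3-192*m^4 with hg1
  set g2 := 3/16+17/4*m-15*m^2+12*m^3 with hg2
  have e : (2*m*(1+θ) + 2*θ*c) * ((q*(1-3*m) - 9*θ^2*m)*(1-θ^2) - q*x) - q*x*c*(1-θ)
     = m*g0 + m*g1*c + g2*c^2 := by
    rw [hg0, hg1, hg2, hq, hθ, hx']; ring
  rw [e]
  have h2 : 0 < g2 := g2_pos m hm.le (by linarith)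
  clear e
  rcases le_total m (33/200) with h | h
  · have hd := disc_pos m hm.le h
    have hd' : 0 ≤ 4*g0*g2 - m*g1^2 := by
      rw [hg0, hg1, hg2]; linarith
    clear_value g0 g1 g2
    have : 0 ≤ 4*g2*(m*g0 + m*g1*c + g2*c^2) := by
      have : 4*g2*(m*g0 + m*g1*c + g2*c^2) = (2*g2*c+m*g1)^2 + m*(4*g0*g2 - m*g1^2) := by ring
      rw [this]; positivity
    exact (mul_nonneg_iff_of_pos_left (by positivity)).1 this
  · have a := Gc0_pos m h (by linarith)
    have b := slope_pos m h (by linarith)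
    have e0 : 0 ≤ c - (7*m-1) := by linarith
    have a' : 0 ≤ m*g0 + m*g1*(7*m-1) + g2*(7*m-1)^2 := by rw [hg0, hg1, hg2]; linarith
    have b' : 0 ≤ m*g1 + 2*g2*(7*m-1) := by rw [hg1, hg2]; linarith
    clear_value g0 g1 g2
    nlinarith [mul_nonneg e0 b', mul_nonneg h2.le (sq_nonneg (c - (7*m-1)))]
theorem T_pos (m x θ q c P C Q G : ℝ) (hm : 0 < m) (hx : 0 < x) (hθ : θ = 1/2 - 2*m) (hq : q = 1 - 3*θ^2)
    (hcc : c = 1 - m - 2*x) (hc : 0 < c) (h4 : 4*m + x < 1)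
    (hP : 0 ≤ P) (hQ : 0 ≤ Q) (hCS : ∀ s t : ℝ, 0 ≤ s^2*P + 2*(s*t)*C + t^2*Q) (hQG : Q ≤ x*G) :
    0 ≤ (1 + 2*m/c)*P - 2*C - Q - (1/(1-θ^2))*((1-θ)^2*P - 2*(θ*(1-θ))*C + θ^2*Q)
      + (1 - 3*m - 9*θ^2*m*(1/q))*G := by
  have hG := G_pos m x θ q c hm hx hθ hq hcc hc h4
  have hθ0 : 0 < θ := by linarith
  have hθ1 : θ < 1/2 := by linarith
  have hq0 : 0 < q := by rw [hq]; nlinarith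
  have h1 : 0 < 1 - θ^2 := by nlinarith
  have h1m : 0 < 1 - θ := by linarith
  have hA : 0 < 2*m*(1+θ) + 2*θ*c := by positivity
  have hB : 0 ≤ (q*(1-3*m) - 9*θ^2*m)*(1-θ^2) - q*x := by
    by_contra hcon
    push Not at hcon
    have := mul_neg_of_pos_of_neg hA hcon
    have h' : 0 < q*x*c*(1-θ) := by positivity
    linarith
  have hW : 0 ≤ q*(1-3*m) - 9*θ^2*m := by
    have : 0 < q * x := by positivity
    by_contra hcon
    push Not at hcon
    nlinarith [mul_neg_of_neg_of_pos hcon h1]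
  obtain ⟨W, hWd⟩ : ∃ W, W = 1 - 3*m - 9*θ^2*m*(1/q) := ⟨_, rfl⟩
  have hW' : W = (q*(1-3*m) - 9*θ^2*m)/q := by rw [hWd]; field_simp
  have hW0 : 0 ≤ W := by rw [hW']; positivity
  rw [← hWd]
  have hWG : W/x*Q ≤ W*G := by
    have := mul_le_mul_of_nonneg_left hQG (div_nonneg hW0 hx.le)
    have e : W/x*(x*G) = W*G := by field_simp
    linarith
  obtain ⟨α, hα⟩ : ∃ α, α = 2*m/c + 2*θ/(1+θ) := ⟨_, rfl⟩
  obtain ⟨δ, hδ⟩ : ∃ δ, δ = W/x - 1/(1-θ^2) := ⟨_, rfl⟩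
  have hα0 : 0 < α := by rw [hα]; positivity
  have h2 : 1 - θ^2 = (1-θ)*(1+θ) := by ring
  have key : 0 ≤ α*δ - (1/(1+θ))^2 := by
    have : α*δ - (1/(1+θ))^2 = ((2*m*(1+θ) + 2*θ*c) * ((q*(1-3*m) - 9*θ^2*m)*(1-θ^2) - q*x) - q*x*c*(1-θ))
       / (c*(1+θ)*(q*x*(1-θ^2))) := by
      rw [hα, hδ, hW', h2]
      have := h1m.ne'
      have := hq0.ne'
      have : 1 + θ ≠ 0 := by positivity
      clear hq hcc hθ
      field_simp
    rw [this]; positivity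
  have hcs := hCS α (-(1/(1+θ)))
  have e : (1 + 2*m/c)*P - 2*C - Q - (1/(1-θ^2))*((1-θ)^2*P - 2*(θ*(1-θ))*C + θ^2*Q) + W/x*Q
     = α*P - 2*(1/(1+θ))*C + δ*Q := by
    rw [hα, hδ, h2]
    have := h1m.ne'
    have : 1 + θ ≠ 0 := by positivity
    clear hq hcc hθ
    field_simp
    ring
  have f : 0 ≤ α*(α*P - 2*(1/(1+θ))*C + δ*Q) := by
    nlinarith [mul_nonneg key hQ]
  have := (mul_nonneg_iff_of_pos_left hα0).1 f
  linarith

/-- bilinear form `xᵀ S y` -/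
noncomputable def bl {ι κ : Type*} [Fintype ι] [Fintype κ] (S : Matrix ι κ ℝ) (x : ι → ℝ) (y : κ → ℝ) : ℝ :=
  x ⬝ᵥ S.mulVec y

section blsec
variable {ι κ : Type*} [Fintype ι] [Fintype κ] (S : Matrix ι κ ℝ)

theorem bl_add_left (x x' : ι → ℝ) (y : κ → ℝ) : bl S (x + x') y = bl S x y + bl S x' y := by
  simp [bl, add_dotProduct]
theorem bl_add_right (x : ι → ℝ) (y y' : κ → ℝ) : bl S x (y + y') = bl S x y + bl S x y' := by
  simp [bl, mulVec_add, dotProduct_add]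
theorem bl_smul_left (c : ℝ) (x : ι → ℝ) (y : κ → ℝ) : bl S (c • x) y = c * bl S x y := by
  simp [bl]
theorem bl_smul_right (c : ℝ) (x : ι → ℝ) (y : κ → ℝ) : bl S x (c • y) = c * bl S x y := by
  simp [bl, mulVec_smul]
theorem bl_zero_right (x : ι → ℝ) : bl S x 0 = 0 := by
  simp [bl]
theorem bl_transpose (x : ι → ℝ) (y : κ → ℝ) : bl Sᵀ y x = bl S x y := by
  rw [bl, bl, mulVec_transpose, dotProduct_comm, dotProduct_mulVec]
theorem bl_smul_mat (c : ℝ) (x : ι → ℝ) (y : κ → ℝ) : bl (c • S) x y = c * bl S x y := by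
  simp [bl, smul_mulVec]
end blsec

theorem bl_symm {ι : Type*} [Fintype ι] (S : Matrix ι ι ℝ) (h : Sᵀ = S) (x y : ι → ℝ) :
    bl S x y = bl S y x := by
  conv_lhs => rw [← h]
  exact bl_transpose S y x

theorem vecNormSq_eq {ι : Type*} [Fintype ι] (S : Matrix ι ι ℝ) (x : ι → ℝ) : vecNormSq S x = bl S x x := rfl

theorem dot_elim {ι κ : Type*} [Fintype ι] [Fintype κ] (a a' : ι → ℝ) (b b' : κ → ℝ) :
    Sum.elim a b ⬝ᵥ Sum.elim a' b' = a ⬝ᵥ a' + b ⬝ᵥ b' := by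
  simp [dotProduct]

theorem vecNormSq_blocks {ι κ : Type*} [Fintype ι] [Fintype κ] (S₁₁ : Matrix ι ι ℝ) (S₁₂ : Matrix ι κ ℝ)
    (S₂₂ : Matrix κ κ ℝ) (a : ι → ℝ) (b : κ → ℝ) :
    vecNormSq (Matrix.fromBlocks S₁₁ S₁₂ S₁₂ᵀ S₂₂) (Sum.elim a b) =
      bl S₁₁ a a + 2 * bl S₁₂ a b + bl S₂₂ b b := by
  have h := bl_transpose S₁₂ a b
  simp only [bl] at h
  simp only [vecNormSq, bl, fromBlocks_mulVec, dot_elim, dotProduct_add, Sum.elim_comp_inl, Sum.elim_comp_inr]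
  rw [h]; ring

theorem young {ι : Type*} [Fintype ι] [DecidableEq ι] (S : Matrix ι ι ℝ) (hS : S.PosDef) (f w : ι → ℝ) :
    2 * (f ⬝ᵥ w) - vecNormSq S w ≤ vecNormSq S⁻¹ f := by
  have h := hS.inv.posSemidef.dotProduct_mulVec_nonneg (f - S.mulVec w)
  have hT : Sᵀ = S := by simpa using hS.isHermitian.eq
  have hu : IsUnit S.det := (Matrix.isUnit_iff_isUnit_det _).1 hS.isUnit
  have e1 : S⁻¹.mulVec (S.mulVec w) = w := by
    rw [mulVec_mulVec, Matrix.nonsing_inv_mul _ hu, one_mulVec]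
  have e2 : S.mulVec w ⬝ᵥ S⁻¹.mulVec f = f ⬝ᵥ w := by
    rw [dotProduct_comm]
    have := bl_symm S hT (S⁻¹.mulVec f) w
    simp only [bl] at this
    rw [this, mulVec_mulVec, Matrix.mul_nonsing_inv _ hu, one_mulVec, dotProduct_comm]
  rw [star_trivial, mulVec_sub, e1, sub_dotProduct, dotProduct_sub, dotProduct_sub, e2,
    dotProduct_comm (S.mulVec w) w] at h
  simp only [vecNormSq]
  linarith

section core
variable {ι κ : Type*} [Fintype ι] [Fintype κ]

theorem step_bound [DecidableEq ι] [DecidableEq κ]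
    (M₁₁ A₁₁ : Matrix ι ι ℝ) (M₁₂ A₁₂ : Matrix ι κ ℝ) (M₂₂ A₂₂ MΓ AΓ : Matrix κ κ ℝ)
    (hM : (Matrix.fromBlocks M₁₁ M₁₂ M₁₂ᵀ M₂₂).PosDef) (hMΓ : MΓ.PosDef)
    (a v' F₁ : ι → ℝ) (b bm e d' F₂ FΓ : κ → ℝ)
    (h1 : M₁₁.mulVec a + M₁₂.mulVec bm + A₁₁.mulVec v' + A₁₂.mulVec e = F₁)
    (h2 : MΓ.mulVec b + AΓ.mulVec d' + M₂₂.mulVec bm + A₂₂.mulVec e + M₁₂ᵀ.mulVec a + A₁₂ᵀ.mulVec v'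
      = F₂ + FΓ) (t : ι → ℝ) :
    2 * (bl M₁₁ t a + bl M₁₂ t bm + bl A₁₁ t v' + bl A₁₂ t e)
     + 2 * (bl MΓ b b + bl AΓ b d' + bl M₂₂ b bm + bl A₂₂ b e + bl M₁₂ a b + bl A₁₂ v' b)
     - (bl M₁₁ t t + 2 * bl M₁₂ t b + bl M₂₂ b b) - bl MΓ b b
    ≤ vecNormSq (Matrix.fromBlocks M₁₁ M₁₂ M₁₂ᵀ M₂₂)⁻¹ (Sum.elim F₁ F₂) + vecNormSq MΓ⁻¹ FΓ := by
  have y1 := young _ hM (Sum.elim F₁ F₂) (Sum.elim t b)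
  have y2 := young _ hMΓ FΓ b
  rw [vecNormSq_blocks, dot_elim] at y1
  rw [vecNormSq_eq] at y2
  have e1 : F₁ ⬝ᵥ t = bl M₁₁ t a + bl M₁₂ t bm + bl A₁₁ t v' + bl A₁₂ t e := by
    rw [dotProduct_comm, ← h1]; simp only [bl, dotProduct_add]
  have e2 : F₂ ⬝ᵥ b + FΓ ⬝ᵥ b = bl MΓ b b + bl AΓ b d' + bl M₂₂ b bm + bl A₂₂ b e + bl M₁₂ a b + bl A₁₂ v' b := by
    rw [← add_dotProduct, ← h2, dotProduct_comm, ← bl_transpose M₁₂, ← bl_transpose A₁₂]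
    simp only [bl, dotProduct_add]
  linarith

theorem regular_step
    (M₁₁ A₁₁ : Matrix ι ι ℝ) (M₁₂ A₁₂ : Matrix ι κ ℝ) (M₂₂ A₂₂ MΓ AΓ : Matrix κ κ ℝ) (m x D : ℝ)
    (hMq : ∀ a b, 0 ≤ bl M₁₁ a a + 2 * bl M₁₂ a b + bl M₂₂ b b)
    (hA11 : ∀ a, 0 ≤ bl A₁₁ a a) (hAΓ : ∀ b, 0 ≤ bl AΓ b b)
    (sM22 : ∀ a b, bl M₂₂ a b = bl M₂₂ b a)
    (sA11 : ∀ a b, bl A₁₁ a b = bl A₁₁ b a)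
    (sA22 : ∀ a b, bl A₂₂ a b = bl A₂₂ b a) (sAΓ : ∀ a b, bl AΓ a b = bl AΓ b a)
    (hm : ∀ z, bl M₂₂ z z ≤ m * bl MΓ z z) (hx : ∀ z, bl A₂₂ z z ≤ x * bl MΓ z z)
    (a v v' : ι → ℝ) (b bm d d' : κ → ℝ) (hv : v' = v + a) (hd : d' = d + b)
    (hs : 2 * (bl M₁₁ a a + bl M₁₂ a bm + bl A₁₁ a v' + bl A₁₂ a d)
     + 2 * (bl MΓ b b + bl AΓ b d' + bl M₂₂ b bm + bl A₂₂ b d + bl M₁₂ a b + bl A₁₂ v' b)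
     - (bl M₁₁ a a + 2 * bl M₁₂ a b + bl M₂₂ b b) - bl MΓ b b ≤ D) :
    (bl A₁₁ v' v' + 2 * bl A₁₂ v' d' + bl A₂₂ d' d' + bl AΓ d' d')
     + (1 - x - 2 * m) * bl MΓ b b
    ≤ (bl A₁₁ v v + 2 * bl A₁₂ v d + bl A₂₂ d d + bl AΓ d d) + 2 * m * bl MΓ bm bm + D := by
  subst hv hd
  have m0 : 0 ≤ bl M₂₂ (b + bm) (b + bm) := by
    have := hMq 0 (b + bm)
    simpa [bl] using this
  have k1 := hMq a bm
  have k2 := hA11 a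
  have k3 := hAΓ b
  have k4 := hm b
  have k5 := hm bm
  have k6 := hx b
  have s1 := sM22 b bm
  have s2 := sA11 a v
  have s3 := sA22 b d
  have s4 := sAΓ b d
  simp only [bl_add_left, bl_add_right] at *
  linarith

theorem two_step
    (M₁₁ A₁₁ : Matrix ι ι ℝ) (M₁₂ A₁₂ : Matrix ι κ ℝ) (M₂₂ A₂₂ MΓ AΓ : Matrix κ κ ℝ) (m x c D₁ D₂ : ℝ)
    (m_pos : 0 < m) (x_pos : 0 < x) (hcc : c = 1 - m - 2*x) (hc : 0 < c) (h4 : 4*m + x < 1)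
    (hMq : ∀ a b, 0 ≤ bl M₁₁ a a + 2 * bl M₁₂ a b + bl M₂₂ b b)
    (hAq : ∀ a b, 0 ≤ bl A₁₁ a a + 2 * bl A₁₂ a b + bl A₂₂ b b) (hAΓ : ∀ b, 0 ≤ bl AΓ b b)
    (sM11 : ∀ a b, bl M₁₁ a b = bl M₁₁ b a) (sM22 : ∀ a b, bl M₂₂ a b = bl M₂₂ b a)
    (sA11 : ∀ a b, bl A₁₁ a b = bl A₁₁ b a)
    (sA22 : ∀ a b, bl A₂₂ a b = bl A₂₂ b a) (sAΓ : ∀ a b, bl AΓ a b = bl AΓ b a)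
    (hm : ∀ z, bl M₂₂ z z ≤ m * bl MΓ z z) (hx : ∀ z, bl A₂₂ z z ≤ x * bl MΓ z z)
    (a₁ a₂ v₀ v₁ v₂ : ι → ℝ) (b₁ b₂ d₀ d₁ d₂ : κ → ℝ)
    (hv1 : v₁ = v₀ + a₁) (hd1 : d₁ = d₀ + b₁) (hv2 : v₂ = v₁ + a₂) (hd2 : d₂ = d₁ + b₂)
    (hs1 : ∀ t, 2 * (bl M₁₁ t a₁ + bl M₁₂ t 0 + bl A₁₁ t v₁ + bl A₁₂ t 0)
     + 2 * (bl MΓ b₁ b₁ + bl AΓ b₁ d₁ + bl M₂₂ b₁ 0 + bl A₂₂ b₁ 0 + bl M₁₂ a₁ b₁ + bl A₁₂ v₁ b₁)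
     - (bl M₁₁ t t + 2 * bl M₁₂ t b₁ + bl M₂₂ b₁ b₁) - bl MΓ b₁ b₁ ≤ D₁)
    (hs2 : ∀ t, 2 * (bl M₁₁ t a₂ + bl M₁₂ t b₁ + bl A₁₁ t v₂ + bl A₁₂ t d₁)
     + 2 * (bl MΓ b₂ b₂ + bl AΓ b₂ d₂ + bl M₂₂ b₂ b₁ + bl A₂₂ b₂ d₁ + bl M₁₂ a₂ b₂ + bl A₁₂ v₂ b₂)
     - (bl M₁₁ t t + 2 * bl M₁₂ t b₂ + bl M₂₂ b₂ b₂) - bl MΓ b₂ b₂ ≤ D₂) :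
    (bl A₁₁ v₂ v₂ + 2 * bl A₁₂ v₂ d₂ + bl A₂₂ d₂ d₂ + bl AΓ d₂ d₂)
     + (1 - x - 2 * m) * bl MΓ b₂ b₂
    ≤ (bl A₁₁ v₀ v₀ + 2 * bl A₁₂ v₀ d₀ + bl A₂₂ d₀ d₀ + bl AΓ d₀ d₀)
      + (1 + 2*m/c) * bl A₂₂ d₀ d₀ + D₁ + D₂ := by
  subst hv2 hd2
  subst hv1 hd1
  obtain ⟨θ, hθ⟩ : ∃ θ, θ = 1/2 - 2*m := ⟨_, rfl⟩
  obtain ⟨q, hq⟩ : ∃ q, q = 1 - 3*θ^2 := ⟨_, rfl⟩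
  have hθ0 : 0 < θ := by linarith
  have hθ1 : θ < 1/2 := by linarith
  have hq0 : 0 < q := by rw [hq]; nlinarith
  have h1 : 0 < 1 - θ^2 := by nlinarith
  have A22n : ∀ z, 0 ≤ bl A₂₂ z z := fun z => by
    have := hAq 0 z
    simpa [bl] using this
  have A11n : ∀ z, 0 ≤ bl A₁₁ z z := fun z => by
    have := hAq z 0
    simpa [bl] using this
  have T := T_pos m x θ q c (bl A₂₂ d₀ d₀) (bl A₂₂ d₀ b₁) (bl A₂₂ b₁ b₁) (bl MΓ b₁ b₁) m_pos x_pos hθ hq hcc hc h4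
    (A22n _) (A22n _) (fun s t => by
      have := A22n (s • d₀ + t • b₁)
      simp only [bl_add_left, bl_add_right, bl_smul_left, bl_smul_right, sA22 b₁ d₀] at this
      linarith) (hx _)
  have S1 := hs1 ((1 - θ) • a₁)
  have S2 := hs2 (a₂ + θ • a₁)
  have f1 := hMq a₂ b₁
  have f2 := hMq (-θ • a₁) (b₁ + b₂)
  have f3 : 0 ≤ (1 - 3*θ^2) * bl M₁₁ a₁ a₁ + 6*θ*bl M₁₂ a₁ b₁ + 9*θ^2*(1/q)*bl M₂₂ b₁ b₁ := by
    rw [← hq]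
    have := hMq a₁ ((3*θ*(1/q)) • b₁)
    simp only [bl_smul_left, bl_smul_right] at this
    have := mul_nonneg hq0.le this
    refine this.trans_eq ?_
    field_simp
    ring
  have f4 := A11n (a₂ + θ • a₁)
  have f5 : 0 ≤ (1-θ^2) * bl A₁₁ a₁ a₁ - 2 * ((1-θ) * bl A₁₂ a₁ d₀ - θ * bl A₁₂ a₁ b₁)
      + (1/(1-θ^2)) * ((1-θ)^2*bl A₂₂ d₀ d₀ - 2*(θ*(1-θ))*bl A₂₂ d₀ b₁ + θ^2*bl A₂₂ b₁ b₁) := by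
    have := hAq a₁ ((-(1/(1-θ^2))) • ((1-θ) • d₀ + (-θ) • b₁))
    simp only [bl_add_left, bl_add_right, bl_smul_left, bl_smul_right, sA22 b₁ d₀] at this
    have := mul_nonneg h1.le this
    refine this.trans_eq ?_
    have := h1.ne'
    clear hq hθ
    field_simp
    ring
  have f6 := mul_le_mul_of_nonneg_left (hm b₁) (show 0 ≤ 3 + 9*θ^2*(1/q) by positivity)
  have f7 := hm b₂
  have f8 := hx b₂
  have f9 := hAΓ b₁
  have f10 := hAΓ b₂
  obtain ⟨rq, hrq⟩ : ∃ rq, rq = 1/q := ⟨_, rfl⟩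
  obtain ⟨lam, hlam⟩ : ∃ lam, lam = 1/(1-θ^2) := ⟨_, rfl⟩
  obtain ⟨η, hη⟩ : ∃ η, η = 2*m/c := ⟨_, rfl⟩
  rw [← hrq] at T f3 f6
  rw [← hlam] at T f5
  rw [← hη] at T ⊢
  simp only [bl_add_left, bl_add_right, bl_smul_left, bl_smul_right, bl_zero_right,
    sM11 a₂ a₁, sM22 b₂ b₁, sA11 a₁ v₀, sA11 a₂ v₀, sA11 a₂ a₁, sA22 b₁ d₀, sA22 b₂ d₀, sA22 b₂ b₁,
    sAΓ b₁ d₀, sAΓ b₂ d₀, sAΓ b₂ b₁] at *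
  clear hs1 hs2 hMq hAq hm hx sM11 sM22 sA11 sA22 sAΓ hAΓ A22n A11n
  linarith
end core

theorem vecNormSq_nonneg' {σ : Type*} [Fintype σ] {S : Matrix σ σ ℝ} (h : S.PosSemidef) (z : σ → ℝ) :
    0 ≤ vecNormSq S z := by
  simpa [vecNormSq] using h.dotProduct_mulVec_nonneg z

theorem core_bound {ι κ : Type*} [Fintype ι] [Fintype κ] [DecidableEq ι] [DecidableEq κ]
    (M₁₁ A₁₁ : Matrix ι ι ℝ) (M₁₂ A₁₂ : Matrix ι κ ℝ) (M₂₂ A₂₂ MΓ AΓ : Matrix κ κ ℝ)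
    (hM : (Matrix.fromBlocks M₁₁ M₁₂ M₁₂ᵀ M₂₂).PosDef)
    (hA : (Matrix.fromBlocks A₁₁ A₁₂ A₁₂ᵀ A₂₂).PosSemidef)
    (hMΓ : MΓ.PosDef) (hAΓ : AΓ.PosSemidef)
    (m x c : ℝ) (m_pos : 0 < m) (x_pos : 0 < x) (hcc : c = 1 - m - 2*x) (hc : 0 < c)
    (hm : ∀ z, vecNormSq M₂₂ z ≤ m * vecNormSq MΓ z) (hx : ∀ z, vecNormSq A₂₂ z ≤ x * vecNormSq MΓ z)
    (v F₁ : ℕ → ι → ℝ) (d F₂ FΓ : ℕ → κ → ℝ)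
    (h01 : M₁₁.mulVec (v 1 - v 0) + A₁₁.mulVec (v 1) = F₁ 0)
    (h02 : MΓ.mulVec (d 1 - d 0) + AΓ.mulVec (d 1) + M₁₂ᵀ.mulVec (v 1 - v 0) + A₁₂ᵀ.mulVec (v 1) = F₂ 0 + FΓ 0)
    (hk1 : ∀ k, M₁₁.mulVec (v (k+2) - v (k+1)) + M₁₂.mulVec (d (k+1) - d k) + A₁₁.mulVec (v (k+2))
      + A₁₂.mulVec (d (k+1)) = F₁ (k+1))
    (hk2 : ∀ k, MΓ.mulVec (d (k+2) - d (k+1)) + AΓ.mulVec (d (k+2)) + M₂₂.mulVec (d (k+1) - d k)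
      + A₂₂.mulVec (d (k+1)) + M₁₂ᵀ.mulVec (v (k+2) - v (k+1)) + A₁₂ᵀ.mulVec (v (k+2)) = F₂ (k+1) + FΓ (k+1))
    (n : ℕ) (hn : 1 ≤ n) :
    ∑ k ∈ Finset.Icc 1 n, (1 - 4*m - x) * vecNormSq MΓ (d (k+1) - d k)
     ≤ (1 + 2*m/c) * (vecNormSq (Matrix.fromBlocks A₁₁ A₁₂ A₁₂ᵀ A₂₂) (Sum.elim (v 0) (d 0))
        + vecNormSq AΓ (d 0) + vecNormSq A₂₂ (d 0)
        + ∑ k ∈ Finset.range (n+1), (vecNormSq (Matrix.fromBlocks M₁₁ M₁₂ M₁₂ᵀ M₂₂)⁻¹ (Sum.elim (F₁ k) (F₂ k))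
            + vecNormSq MΓ⁻¹ (FΓ k))) := by
  have hMq : ∀ a b, 0 ≤ bl M₁₁ a a + 2 * bl M₁₂ a b + bl M₂₂ b b := fun a b => by
    rw [← vecNormSq_blocks]
    simpa [vecNormSq] using hM.posSemidef.dotProduct_mulVec_nonneg (Sum.elim a b)
  have hAq : ∀ a b, 0 ≤ bl A₁₁ a a + 2 * bl A₁₂ a b + bl A₂₂ b b := fun a b => by
    rw [← vecNormSq_blocks]
    simpa [vecNormSq] using hA.dotProduct_mulVec_nonneg (Sum.elim a b)
  have hAΓq : ∀ b, 0 ≤ bl AΓ b b := fun b => vecNormSq_nonneg' hAΓ b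
  have A22n : ∀ z, 0 ≤ bl A₂₂ z z := fun z => by
    have := hAq 0 z
    simpa [bl] using this
  have A11n : ∀ z, 0 ≤ bl A₁₁ z z := fun z => by
    have := hAq z 0
    simpa [bl] using this
  obtain ⟨tM11, -, -, tM22⟩ := Matrix.isHermitian_fromBlocks_iff.1 hM.isHermitian
  obtain ⟨tA11, -, -, tA22⟩ := Matrix.isHermitian_fromBlocks_iff.1 hA.isHermitian
  have sM11 := bl_symm M₁₁ (by simpa using tM11.eq)
  have sM22 := bl_symm M₂₂ (by simpa using tM22.eq)
  have sA11 := bl_symm A₁₁ (by simpa using tA11.eq)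
  have sA22 := bl_symm A₂₂ (by simpa using tA22.eq)
  have sAΓ := bl_symm AΓ (by simpa using hAΓ.isHermitian.eq)
  obtain ⟨D, hD⟩ : ∃ D : ℕ → ℝ, D = fun k => vecNormSq (Matrix.fromBlocks M₁₁ M₁₂ M₁₂ᵀ M₂₂)⁻¹ (Sum.elim (F₁ k) (F₂ k))
            + vecNormSq MΓ⁻¹ (FΓ k) := ⟨_, rfl⟩
  have hDk : ∀ k, vecNormSq (Matrix.fromBlocks M₁₁ M₁₂ M₁₂ᵀ M₂₂)⁻¹ (Sum.elim (F₁ k) (F₂ k))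
            + vecNormSq MΓ⁻¹ (FΓ k) = D k := fun k => by rw [hD]
  have D0 : ∀ k, 0 ≤ D k := fun k => by
    rw [← hDk]
    exact add_nonneg (vecNormSq_nonneg' hM.inv.posSemidef _) (vecNormSq_nonneg' hMΓ.inv.posSemidef _)
  simp only [hDk]
  have hη : 0 ≤ 2*m/c := by positivity
  rw [vecNormSq_blocks]
  have bMΓ : ∀ z, 0 ≤ vecNormSq MΓ z := vecNormSq_nonneg' hMΓ.posSemidef
  have E0 := hAq (v 0) (d 0)
  have E0' : 0 ≤ vecNormSq AΓ (d 0) := hAΓq (d 0)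
  have E0'' : 0 ≤ vecNormSq A₂₂ (d 0) := A22n (d 0)
  have hsumD : ∀ n : ℕ, 0 ≤ ∑ k ∈ Finset.range n, D k := fun n => Finset.sum_nonneg fun k _ => D0 k
  rcases le_or_gt (1 - 4*m - x) 0 with hneg | hpos
  · have l : ∑ k ∈ Finset.Icc 1 n, (1 - 4*m - x) * vecNormSq MΓ (d (k+1) - d k) ≤ 0 :=
      Finset.sum_nonpos fun k _ => mul_nonpos_of_nonpos_of_nonneg hneg (bMΓ _)
    refine l.trans (mul_nonneg (by positivity) ?_)
    have := hsumD (n+1)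
    linarith
  -- steps
  have hs : ∀ k t, _ := fun k t => step_bound M₁₁ A₁₁ M₁₂ A₁₂ M₂₂ A₂₂ MΓ AΓ hM hMΓ
    (v (k+2) - v (k+1)) (v (k+2)) (F₁ (k+1)) (d (k+2) - d (k+1)) (d (k+1) - d k) (d (k+1)) (d (k+2))
    (F₂ (k+1)) (FΓ (k+1)) (hk1 k) (hk2 k) t
  have hs0 : ∀ t, _ := fun t => step_bound M₁₁ A₁₁ M₁₂ A₁₂ M₂₂ A₂₂ MΓ AΓ hM hMΓ
    (v 1 - v 0) (v 1) (F₁ 0) (d 1 - d 0) 0 0 (d 1)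
    (F₂ 0) (FΓ 0) (by simpa using h01) (by simpa using h02) t
  simp only [hDk] at hs hs0
  have two := two_step M₁₁ A₁₁ M₁₂ A₁₂ M₂₂ A₂₂ MΓ AΓ m x c (D 0) (D 1) m_pos x_pos hcc hc (by linarith)
    hMq hAq hAΓq sM11 sM22 sA11 sA22 sAΓ hm hx (v 1 - v 0) (v 2 - v 1) (v 0) (v 1) (v 2)
    (d 1 - d 0) (d 2 - d 1) (d 0) (d 1) (d 2) (by abel) (by abel) (by abel) (by abel) hs0 (hs 0)
  have main : ∀ n : ℕ, ∑ k ∈ Finset.Icc 1 (n+1), (1 - 4*m - x) * vecNormSq MΓ (d (k+1) - d k)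
      + (bl A₁₁ (v (n+2)) (v (n+2)) + 2 * bl A₁₂ (v (n+2)) (d (n+2)) + bl A₂₂ (d (n+2)) (d (n+2))
        + bl AΓ (d (n+2)) (d (n+2))) + 2 * m * vecNormSq MΓ (d (n+2) - d (n+1))
      ≤ (bl A₁₁ (v 0) (v 0) + 2 * bl A₁₂ (v 0) (d 0) + bl A₂₂ (d 0) (d 0) + bl AΓ (d 0) (d 0))
      + (1 + 2*m/c) * bl A₂₂ (d 0) (d 0) + ∑ k ∈ Finset.range (n+2), D k := by
    intro n
    induction n with
    | zero =>
      simp only [zero_add, Finset.Icc_self, Finset.sum_singleton, Finset.sum_range_succ, Finset.sum_range_zero,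
        vecNormSq_eq]
      norm_num only at two ⊢
      linarith
    | succ n ih =>
      have r := regular_step M₁₁ A₁₁ M₁₂ A₁₂ M₂₂ A₂₂ MΓ AΓ m x (D (n+2)) hMq A11n hAΓq sM22 sA11 sA22 sAΓ hm hx
        (v (n+3) - v (n+2)) (v (n+2)) (v (n+3)) (d (n+3) - d (n+2)) (d (n+2) - d (n+1)) (d (n+2)) (d (n+3))
        (by abel) (by abel) (hs (n+1) _)
      rw [Finset.sum_Icc_succ_top (by omega), Finset.sum_range_succ]
      simp only [vecNormSq_eq] at ih ⊢
      rw [show n + 1 + 2 = n + 3 by ring, show n + 1 + 1 = n + 2 by ring, show n + 2 + 1 = n + 3 by ring]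
      linarith
  obtain ⟨n, rfl⟩ : ∃ j, n = j + 1 := ⟨n - 1, by omega⟩
  have mn := main n
  have e1 := hAq (v (n+2)) (d (n+2))
  have e2 := hAΓq (d (n+2))
  have e3 := mul_nonneg (mul_nonneg zero_le_two m_pos.le) (bMΓ (d (n+2) - d (n+1)))
  have e4 := mul_nonneg hη (hsumD (n+2))
  have e5 := mul_nonneg hη E0
  have e6 := mul_nonneg hη E0'
  simp only [vecNormSq_eq] at *
  rw [show n + 1 + 1 = n + 2 by ring]
  linarith

/-- **Second-difference estimate for the Lie splitting (inequality (4.9) in the proof of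
Theorem 4.4).** Under the weak CFL condition, consistent initial data with `∂_τ p⁰ = ṗ(0)`,
and positivity of `1 − c_M h − 2 c_{α,M} τ h − 2 c_A τ h⁻¹`, the differences of consecutive
discrete derivatives of `p` are estimated. -/
theorem lie_splitting_second_difference
    (N₁ N₂ : ℕ) (hN₁ : 0 < N₁) (hN₂ : 0 < N₂)
    (M₁₁ A₁₁ : Matrix (Fin N₁) (Fin N₁) ℝ)
    (M₁₂ A₁₂ : Matrix (Fin N₁) (Fin N₂) ℝ)
    (M₂₁ A₂₁ : Matrix (Fin N₂) (Fin N₁) ℝ)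
    (M₂₂ A₂₂ MΓ AΓ : Matrix (Fin N₂) (Fin N₂) ℝ)
    (hM : (Matrix.fromBlocks M₁₁ M₁₂ M₂₁ M₂₂).PosDef)
    (hA : (Matrix.fromBlocks A₁₁ A₁₂ A₂₁ A₂₂).PosSemidef)
    (hM21 : M₂₁ = M₁₂ᵀ) (hA21 : A₂₁ = A₁₂ᵀ)
    (hMΓ : MΓ.PosDef) (hAΓ : AΓ.PosSemidef)
    -- constants
    (τ h cM cinv αΩ : ℝ)
    (hτ : 0 < τ) (hh : 0 < h) (hcM : 0 < cM) (hcinv : 0 < cinv) (hαΩ : 0 ≤ αΩ)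
    -- boundary mass estimate
    (hmass : ∀ z : Fin N₂ → ℝ, vecNormSq M₂₂ z ≤ cM * h * vecNormSq MΓ z)
    -- inverse estimate
    (hinv : ∀ z : Fin N₂ → ℝ, vecNormSq A₂₂ z ≤ (αΩ + cinv / h ^ 2) * vecNormSq M₂₂ z)
    -- weak CFL condition
    (hCFL : 7 * cinv * cM * τ < 3 * h)
    -- positivity of the denominator
    (hden : 0 < 1 - cM * h - 2 * (cM * αΩ) * τ * h - 2 * (cM * cinv) * τ / h)
    -- the discrete sequences and data
    (u₁ f₁ : ℕ → Fin N₁ → ℝ) (p dtp f₂ fΓ : ℕ → Fin N₂ → ℝ)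
    (hdtp : ∀ n : ℕ, dtp (n + 1) = τ⁻¹ • (p (n + 1) - p n))
    (hscheme₁ : ∀ n : ℕ,
      M₁₁.mulVec (τ⁻¹ • (u₁ (n + 1) - u₁ n)) + A₁₁.mulVec (u₁ (n + 1)) =
        f₁ (n + 1) - M₁₂.mulVec (dtp n) - A₁₂.mulVec (p n))
    (hscheme₂ : ∀ n : ℕ,
      MΓ.mulVec (dtp (n + 1)) + AΓ.mulVec (p (n + 1)) =
        fΓ (n + 1) + f₂ (n + 1) - M₂₂.mulVec (dtp n) - A₂₂.mulVec (p n)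
          - M₂₁.mulVec (τ⁻¹ • (u₁ (n + 1) - u₁ n)) - A₂₁.mulVec (u₁ (n + 1)))
    -- consistent initial data: u̇₁(0) and ṗ(0)
    (du₁0 : Fin N₁ → ℝ) (dp0 : Fin N₂ → ℝ)
    (hcons₁ : M₁₁.mulVec du₁0 + M₁₂.mulVec dp0 + A₁₁.mulVec (u₁ 0) + A₁₂.mulVec (p 0) = f₁ 0)
    (hcons₂ : M₂₁.mulVec du₁0 + (M₂₂ + MΓ).mulVec dp0 + A₂₁.mulVec (u₁ 0)
        + (A₂₂ + AΓ).mulVec (p 0) = f₂ 0 + fΓ 0)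
    -- ∂_τ p⁰ = ṗ(0)
    (hinit : dtp 0 = dp0) :
    ∀ n : ℕ, 1 ≤ n →
      τ * ∑ k ∈ Finset.Icc 1 n,
          (1 - 4 * cM * h - (cM * αΩ) * τ * h - (cM * cinv) * τ / h)
            * vecNormSq MΓ (dtp (k + 1) - dtp k)
      ≤ ((1 + cM * h - 2 * (cM * αΩ) * τ * h - 2 * (cM * cinv) * τ / h)
            / (1 - cM * h - 2 * (cM * αΩ) * τ * h - 2 * (cM * cinv) * τ / h))
          * (τ ^ 2 * vecNormSq (Matrix.fromBlocks A₁₁ A₁₂ A₂₁ A₂₂) (Sum.elim du₁0 dp0)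
            + τ ^ 2 * vecNormSq AΓ dp0
            + τ ^ 2 * vecNormSq A₂₂ dp0
            + τ * ∑ k ∈ Finset.range (n + 1),
                (vecNormSq (Matrix.fromBlocks M₁₁ M₁₂ M₂₁ M₂₂)⁻¹
                    (Sum.elim (f₁ (k + 1)) (f₂ (k + 1)) - Sum.elim (f₁ k) (f₂ k))
                  + vecNormSq MΓ⁻¹ (fΓ (k + 1) - fΓ k))) := by
  intro n hn
  subst hM21 hA21
  obtain ⟨m, hmd⟩ : ∃ m, m = cM * h := ⟨_, rfl⟩
  obtain ⟨x, hxd⟩ : ∃ x, x = (cM * αΩ) * τ * h + (cM * cinv) * τ / h := ⟨_, rfl⟩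
  obtain ⟨c, hcd⟩ : ∃ c, c = 1 - m - 2 * x := ⟨_, rfl⟩
  have m_pos : 0 < m := by rw [hmd]; positivity
  have x_pos : 0 < x := by
    have : 0 ≤ (cM * αΩ) * τ * h := by positivity
    have : 0 < (cM * cinv) * τ / h := by positivity
    linarith
  have ec : 1 - cM * h - 2 * (cM * αΩ) * τ * h - 2 * (cM * cinv) * τ / h = c := by
    rw [hcd, hxd, hmd]; ring
  have ec2 : 1 + cM * h - 2 * (cM * αΩ) * τ * h - 2 * (cM * cinv) * τ / h = c + 2 * m := by
    rw [hcd, hxd, hmd]; ring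
  have ec3 : 1 - 4 * cM * h - (cM * αΩ) * τ * h - (cM * cinv) * τ / h = 1 - 4 * m - x := by
    rw [hxd, hmd]; ring
  rw [ec] at hden
  rw [ec, ec2, ec3]
  have eK : (c + 2 * m) / c = 1 + 2 * m / c := by field_simp
  rw [eK]
  have hτ0 : τ ≠ 0 := hτ.ne'
  have hA' : (Matrix.fromBlocks (τ • A₁₁) (τ • A₁₂) (τ • A₁₂)ᵀ (τ • A₂₂)).PosSemidef := by
    have := hA.smul hτ.le
    rwa [Matrix.fromBlocks_smul, ← Matrix.transpose_smul] at this
  have hxx : ∀ z, vecNormSq (τ • A₂₂) z ≤ x * vecNormSq MΓ z := fun z => by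
    rw [vecNormSq_eq, bl_smul_mat]
    have h1 := hinv z
    have h2 := mul_le_mul_of_nonneg_left (hmass z) (show 0 ≤ αΩ + cinv / h ^ 2 by positivity)
    have h3 := mul_le_mul_of_nonneg_left (h1.trans h2) hτ.le
    have e : τ * ((αΩ + cinv / h ^ 2) * (cM * h * vecNormSq MΓ z)) = x * vecNormSq MΓ z := by
      rw [hxd]; field_simp
    rw [e] at h3
    exact h3
  have hsc : ∀ {a b : ℕ} (S : Matrix (Fin a) (Fin b) ℝ) (y z : Fin b → ℝ),
      (τ • S).mulVec (τ⁻¹ • (y - z)) = S.mulVec y - S.mulVec z := by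
    intro a b S y z
    rw [smul_mulVec, mulVec_smul, smul_smul, mul_inv_cancel₀ hτ0, one_smul, mulVec_sub]
  obtain ⟨v, hv0, hvs⟩ : ∃ v : ℕ → Fin N₁ → ℝ, v 0 = du₁0 ∧ ∀ k, v (k+1) = τ⁻¹ • (u₁ (k + 1) - u₁ k) :=
    ⟨fun k => Nat.casesOn k du₁0 (fun k => τ⁻¹ • (u₁ (k + 1) - u₁ k)), rfl, fun k => rfl⟩
  have hAv : ∀ {a : ℕ} (S : Matrix (Fin a) (Fin N₁) ℝ) k,
      (τ • S).mulVec (v (k+1)) = S.mulVec (u₁ (k+1)) - S.mulVec (u₁ k) := by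
    intro a S k; rw [hvs, hsc]
  have hAd : ∀ {a : ℕ} (S : Matrix (Fin a) (Fin N₂) ℝ) k,
      (τ • S).mulVec (dtp (k+1)) = S.mulVec (p (k+1)) - S.mulVec (p k) := by
    intro a S k; rw [hdtp, hsc]
  simp only [← hvs] at hscheme₁ hscheme₂
  have core := core_bound M₁₁ (τ • A₁₁) M₁₂ (τ • A₁₂) M₂₂ (τ • A₂₂) MΓ (τ • AΓ) hM hA' hMΓ (hAΓ.smul hτ.le)
    m x c m_pos x_pos hcd hden (by rw [hmd]; exact hmass) hxx v (fun k => f₁ (k+1) - f₁ k) dtp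
    (fun k => f₂ (k+1) - f₂ k) (fun k => fΓ (k+1) - fΓ k)
    (by
      have a := hscheme₁ 0
      rw [hAv, ← hcons₁, ← hv0, ← hinit]
      simp only [zero_add, mulVec_sub] at a ⊢
      linear_combination (exp := 1) a)
    (by
      have a := hscheme₂ 0
      rw [Matrix.transpose_smul, hAv, hAd]
      have b := hcons₂
      rw [← hv0, ← hinit] at b
      simp only [zero_add, mulVec_sub, add_mulVec] at a b ⊢
      linear_combination (exp := 1) a - b)
    (fun k => by
      have a := hscheme₁ (k+1)
      have b := hscheme₁ k
      rw [hAv, hAd]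
      simp only [mulVec_sub]
      linear_combination (exp := 1) a - b)
    (fun k => by
      have a := hscheme₂ (k+1)
      have b := hscheme₂ k
      rw [Matrix.transpose_smul, hAv, hAd, hAd]
      simp only [mulVec_sub]
      linear_combination (exp := 1) a - b)
    n hn
  have core' := mul_le_mul_of_nonneg_left core hτ.le
  refine core'.trans (le_of_eq ?_)
  rw [hv0, hinit, vecNormSq_blocks, vecNormSq_blocks]
  have esub : ∀ k, Sum.elim (f₁ (k + 1)) (f₂ (k + 1)) - Sum.elim (f₁ k) (f₂ k)
      = Sum.elim (f₁ (k+1) - f₁ k) (f₂ (k+1) - f₂ k) := by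
    intro k; ext i; cases i <;> simp
  simp only [esub, vecNormSq_eq, bl_smul_mat]
  ring
end

section
/- Stability of the Lie splitting for semi-linear problems (Lemma A.1): Assume the weak CFL condition 7 c_inv c_M τ < 3 h and 1/(2τ) > C, where C := max{2L_A, √(8L_M), L_{A_Γ}, 2√(L_{M_Γ})}. Then for every n ≥ 1 the iterates of the semi-linear Lie splitting satisfy τ Σ_{k=1}^{n} ( 1 − c_M h (4 + 4 τ² L_M) − (c_{α,M} τ h + c_A τ h⁻¹)(1 + 4 τ² L_A) ) ‖∂_τ p^{k+1} − ∂_τ p^{k}‖_{M_Γ}² ≤ e^{2 tⁿ C} [ ‖u¹ − u⁰‖_{A + η_Ω M}² + ‖p¹ − p⁰‖_{A_Γ + η_Γ M_Γ}² + 2τ ‖∂_τ p¹ − ∂_τ p⁰‖_{M₂₂}² + 2 L τ² Σ_{k=0}^{n−1} e^{−2 t^{k} C} τ ], where L := L_Ω + L_Γ and ‖x‖_{A + η_Ω M}² := xᵀ(A + η_Ω M)x, ‖q‖_{A_Γ + η_Γ M_Γ}² := qᵀ(A_Γ + η_Γ M_Γ)q. -/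
open Matrix Finset

/-- The constant `η` from Lemma A.1: `η := √(2 L_M)` if `L_A < √(2 L_M)`, and
`η := L_A + √(L_A² − 2 L_M)` otherwise. -/
noncomputable def etaConst (LA LM : ℝ) : ℝ :=
  if LA < Real.sqrt (2 * LM) then Real.sqrt (2 * LM) else LA + Real.sqrt (LA ^ 2 - 2 * LM)


theorem ls_gram2 {P R T α β γ : ℝ} (hγ : 0 < γ) (hP : 0 ≤ P) 
    (hsq : 0 ≤ γ^2 * T - 2*γ*β*R + β^2 * P) (h : β^2 ≤ α*γ) :
    0 ≤ α * P - 2*β*R + γ*T := by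
  have : 0 ≤ γ * (α * P - 2*β*R + γ*T) := by nlinarith
  exact nonneg_of_mul_nonneg_right this hγ

/-- The boundary form. -/
noncomputable def lsPhi (y ν K J B P R T : ℝ) : ℝ :=
  (2*(1-y) + y*ν - (1/2 - 3/20*y)) * P - 2*ν*R + ν*T
   - K * (((2*(1-y)+3/2*(y*ν))^2 * P - 2*(2*(1-y)+3/2*(y*ν))*(3/2*ν)*R + (3/2*ν)^2*T)/4
      + y/4*(9/4*ν^2)*((1-y)^2*P - 2*(1-y)*R + T) + y*(1-y)*P)
   - (17/20 - 13/10*y)*B*P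
   - (1-2*y)*((1-K-B)*(1+3/8*(y*ν)) + 3/8*J)*P

theorem ls_v00 {y P R T : ℝ} (hy : 0 ≤ y) (hy1 : y ≤ 5/16) (hP : 0 ≤ P)
   (hsq : ∀ α β : ℝ, 0 ≤ α^2*P - 2*α*β*R + β^2*T) :
   0 ≤ lsPhi y (1/2+7/20*y+17/25*y^2) 0 0 0 P R T := by
  set ν := 1/2+7/20*y+17/25*y^2 with hν
  have hν0 : 0 < ν := by positivity
  have := @ls_gram2 P R T (2*(1-y) + y*ν - (1/2 - 3/20*y) - (1-2*y)*(1+3/8*(y*ν))) ν ν hν0 hP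
    (by nlinarith [hsq ν ν]) (by
      have : ν ≤ (2*(1-y) + y*ν - (1/2 - 3/20*y) - (1-2*y)*(1+3/8*(y*ν))) := by
        rw [hν]; nlinarith [mul_nonneg hy (sub_nonneg.2 hy1), mul_nonneg (mul_nonneg hy hy) (sub_nonneg.2 hy1), mul_nonneg (mul_nonneg (mul_nonneg hy hy) hy) (sub_nonneg.2 hy1)]
      nlinarith)
  unfold lsPhi; nlinarith

theorem ls_v01 {y P R T : ℝ} (hy : 0 ≤ y) (hy1 : y ≤ 5/16) (hP : 0 ≤ P)
   (hsq : ∀ α β : ℝ, 0 ≤ α^2*P - 2*α*β*R + β^2*T) :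
   0 ≤ lsPhi y (1/2+7/20*y+17/25*y^2) 0 0 1 P R T := by
  set ν := 1/2+7/20*y+17/25*y^2 with hν
  have hν0 : 0 < ν := by positivity
  have := @ls_gram2 P R T (2*(1-y) + y*ν - (1/2 - 3/20*y) - (17/20 - 13/10*y)) ν ν hν0 hP
    (by nlinarith [hsq ν ν]) (by
      have : ν ≤ (2*(1-y) + y*ν - (1/2 - 3/20*y) - (17/20 - 13/10*y)) := by
        rw [hν]; nlinarith [mul_nonneg hy (sub_nonneg.2 hy1), mul_nonneg (mul_nonneg hy hy) (sub_nonneg.2 hy1), mul_nonneg (mul_nonneg (mul_nonneg hy hy) hy) (sub_nonneg.2 hy1)]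
      nlinarith)
  unfold lsPhi; nlinarith

theorem ls_vgen {y ν K J P R T : ℝ} (hP : 0 ≤ P) (hν0 : 0 < ν)
   (hsq : ∀ α β : ℝ, 0 ≤ α^2*P - 2*α*β*R + β^2*T) 
   (h0 : 0 < 1 - K*(9/16)*ν*(1+y))
   (h : ν * (1 - K*(3/8)*(2*(1-y)+3/2*(y*ν)*(2-y)))^2 ≤ 
     (2*(1-y) + y*ν - (1/2 - 3/20*y) - K*((1-y)+3/2*(y*ν)*(1-y) + 9/16*y*ν^2*(y+(1-y)^2))
       - (1-2*y)*((1-K)*(1+3/8*(y*ν)) + 3/8*J)) * (1 - K*(9/16)*ν*(1+y))) :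
   0 ≤ lsPhi y ν K J 0 P R T := by
  have := @ls_gram2 P R T (2*(1-y) + y*ν - (1/2 - 3/20*y) - K*((1-y)+3/2*(y*ν)*(1-y) + 9/16*y*ν^2*(y+(1-y)^2))
       - (1-2*y)*((1-K)*(1+3/8*(y*ν)) + 3/8*J)) (ν*(1 - K*(3/8)*(2*(1-y)+3/2*(y*ν)*(2-y)))) 
       (ν*(1 - K*(9/16)*ν*(1+y))) (mul_pos hν0 h0) hP 
    (by nlinarith [hsq (ν*(1 - K*(3/8)*(2*(1-y)+3/2*(y*ν)*(2-y)))) (ν*(1 - K*(9/16)*ν*(1+y)))]) 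
    (by have := mul_le_mul_of_nonneg_left h hν0.le; nlinarith)
  unfold lsPhi; linear_combination this

theorem ls_vhalf {y P R T : ℝ} (hy : 0 ≤ y) (hy1 : y ≤ 5/16) (hP : 0 ≤ P)
   (hsq : ∀ α β : ℝ, 0 ≤ α^2*P - 2*α*β*R + β^2*T) :
   0 ≤ lsPhi y (1/2+7/20*y+17/25*y^2) (1/2) (1/2) 0 P R T := by
  have h' := sub_nonneg.2 hy1
  apply ls_vgen hP (by positivity) hsq
  · nlinarith [mul_nonneg hy h', mul_nonneg (mul_nonneg hy hy) h']
  · have e1 : 0 ≤ y^4 * (5/16-y) := by positivity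
    have e2 : 0 ≤ y^5 * (5/16-y) := by positivity
    have e3 : 0 ≤ y^6 * (5/16-y) := by positivity
    have e4 : 0 ≤ (5/16-y)^2 := by positivity
    have e5 : 0 ≤ y*(5/16-y)^2 := by positivity
    have e6 : 0 ≤ y^2*(5/16-y)^2 := by positivity
    have e7 : 0 ≤ y^4 := by positivity
    have e8 : 0 ≤ y^8 := by positivity
    have e9 : 0 ≤ y^9 := by positivity
    have e10 : 0 ≤ y^3*(5/16-y) := by positivity
    nlinarith

theorem ls_vone {y P R T : ℝ} (hy : 0 ≤ y) (hy1 : y ≤ 5/16) (hP : 0 ≤ P)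
   (hsq : ∀ α β : ℝ, 0 ≤ α^2*P - 2*α*β*R + β^2*T) :
   0 ≤ lsPhi y (1/2+7/20*y+17/25*y^2) 1 0 0 P R T := by
  have h' := sub_nonneg.2 hy1
  apply ls_vgen hP (by positivity) hsq
  · nlinarith [mul_nonneg hy h', mul_nonneg (mul_nonneg hy hy) h']
  · have e1 : 0 ≤ y^4 * (5/16-y) := by positivity
    have e2 : 0 ≤ y^5 * (5/16-y) := by positivity
    have e3 : 0 ≤ y^6 * (5/16-y) := by positivity
    have e4 : 0 ≤ (5/16-y)^2 := by positivity
    have e5 : 0 ≤ y*(5/16-y)^2 := by positivity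
    have e6 : 0 ≤ y^2*(5/16-y)^2 := by positivity
    have e7 : 0 ≤ y^4 := by positivity
    have e8 : 0 ≤ y^8 := by positivity
    have e9 : 0 ≤ y^9 := by positivity
    have e10 : 0 ≤ y^3*(5/16-y) := by positivity
    nlinarith

/-- values at `ν = 0` -/
theorem ls_z {y P R T : ℝ} (hy : 0 ≤ y) (hy1 : y ≤ 5/16) (hP : 0 ≤ P) :
   0 ≤ lsPhi y 0 0 0 0 P R T ∧ 0 ≤ lsPhi y 0 0 0 1 P R T ∧ 0 ≤ lsPhi y 0 (1/2) (1/2) 0 P R T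
   ∧ 0 ≤ lsPhi y 0 1 0 0 P R T := by
  have h' := sub_nonneg.2 hy1
  have e := mul_nonneg hP h'
  have e2 := mul_nonneg hP hy
  have e3 := mul_nonneg e2 h'
  unfold lsPhi
  refine ⟨?_, ?_, ?_, ?_⟩ <;> nlinarith

theorem ls_conc {y ν n K J B P R T : ℝ} (hy : 0 ≤ y) (hK : 0 ≤ K) (hν : 0 ≤ ν) (hn : ν ≤ n) (hn0 : 0 < n)
   (hsq : ∀ α β : ℝ, 0 ≤ α^2*P - 2*α*β*R + β^2*T) 
   (h0 : 0 ≤ lsPhi y 0 K J B P R T) (h1 : 0 ≤ lsPhi y n K J B P R T) :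
   0 ≤ lsPhi y ν K J B P R T := by
  have a1 := hsq y 1
  have a2 := mul_nonneg hy (hsq (1-y) 1)
  have a3 : 0 ≤ K * (ν*(n-ν)) := by have := sub_nonneg.2 hn; positivity
  have a4 := mul_nonneg a3 (add_nonneg a1 a2)
  have b0 := mul_nonneg (sub_nonneg.2 hn) h0
  have b1 := mul_nonneg hν h1
  have a5 := mul_nonneg hn0.le a4
  have : 0 ≤ n * lsPhi y ν K J B P R T := by
    unfold lsPhi at *
    linear_combination b0 + b1 + 9/16*a5
  exact nonneg_of_mul_nonneg_right this hn0

theorem ls_phi {y ν K B P R T : ℝ} (hy : 0 ≤ y) (hy1 : y ≤ 5/16) (hP : 0 ≤ P)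
   (hsq : ∀ α β : ℝ, 0 ≤ α^2*P - 2*α*β*R + β^2*T) (hK : 0 ≤ K) (hB : 0 ≤ B) (hKB : K + B ≤ 1)
   (hν : 0 ≤ ν) (hn : ν ≤ 1/2+7/20*y+17/25*y^2) :
   0 ≤ lsPhi y ν K ((1-K-B)*K) B P R T := by
  have hn0 : 0 < 1/2+7/20*y+17/25*y^2 := by positivity
  obtain ⟨z0, z1, z2, z3⟩ := @ls_z y P R T hy hy1 hP
  have c0 := ls_conc hy le_rfl hν hn hn0 hsq z0 (ls_v00 hy hy1 hP hsq)
  have c1 := ls_conc hy le_rfl hν hn hn0 hsq z1 (ls_v01 hy hy1 hP hsq)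
  have c2 := ls_conc hy (by norm_num) hν hn hn0 hsq z2 (ls_vhalf hy hy1 hP hsq)
  have c3 := ls_conc hy (by norm_num) hν hn hn0 hsq z3 (ls_vone hy hy1 hP hsq)
  have hB' := mul_nonneg hB c1
  have hθ : 0 ≤ 1 - 2*y := by linarith
  have hKP := mul_nonneg hθ hP
  rcases le_total (2*K) (1-B) with h | h
  · have d0 := mul_nonneg (sub_nonneg.2 h) c0
    have d2 := mul_nonneg (mul_nonneg zero_le_two hK) c2
    have d3 : 0 ≤ (K - (1-K-B)*K) * ((1-2*y)*P) := mul_nonneg (by nlinarith) hKP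
    unfold lsPhi at *
    linear_combination hB' + d0 + d2 + 3/8*d3
  · have d0 := mul_nonneg (sub_nonneg.2 h) c3
    have d2 := mul_nonneg (mul_nonneg zero_le_two (by linarith : 0 ≤ 1-K-B)) c2
    have d3 : 0 ≤ ((1-K-B) - (1-K-B)*K) * ((1-2*y)*P) := mul_nonneg (by nlinarith) hKP
    unfold lsPhi at *
    linear_combination hB' + d0 + d2 + 3/8*d3

section lsblocks
variable {V G : Type*} [AddCommGroup V] [Module ℝ V] [AddCommGroup G] [Module ℝ G]

theorem ls_blockA (A : V →ₗ[ℝ] V →ₗ[ℝ] ℝ) (hs : ∀ x y, A x y = A y x) (hp : ∀ x, 0 ≤ A x x)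
    (U x α e : V) (y ν : ℝ) (hy : 0 ≤ y) :
    0 ≤ A (U-x) (U-x) - (1-2*y) * A U U - 3/2*(y*ν) * A (e-α) (U-x) + (1-2*y)*(3/2*(y*ν)) * A e U
      + 2*(1-y) * A (U-α) x - (1-y)*y * A (U-α) (U-α)
      + ( A ((2*(1-y)+3/2*(y*ν)) • α - (3/2*(y*ν)) • e) ((2*(1-y)+3/2*(y*ν)) • α - (3/2*(y*ν)) • e) / 4
        + y/4 * (9/4*ν^2) * A ((1-y) • α - y • e) ((1-y) • α - y • e) + y*(1-y) * A α α) := by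
  have h1 := hp ((2:ℝ) • x - (2*y) • U - (2*(1-y)+3/2*(y*ν)) • α + (3/2*(y*ν)) • e)
  have h2 := mul_nonneg hy (hp ((2:ℝ) • U + (3/2*ν) • ((1-y) • α - y • e)))
  simp only [map_add, map_sub, map_smul, LinearMap.add_apply, LinearMap.sub_apply, LinearMap.smul_apply, smul_eq_mul, hs x U, hs α U, hs e U, hs α x, hs e x, hs e α] at h1 h2 ⊢
  linear_combination h1/4 + h2/4

theorem ls_p0 {y : ℝ} (hy : 0 ≤ y) (hy1 : y ≤ 5/16) : 0 ≤ 1/5 + 34/25*y - 2553/250*y^2 + 2579/125*y^3 - 19027/1000*y^4 + 1299/125*y^5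
      - 1659/1600*y^6 - 88743/10000*y^7 + 369369/40000*y^8 - 53361/20000*y^9 := by
    have h' := sub_nonneg.2 hy1
    have f1 : 0 ≤ y^4*(5/16-y) := by positivity
    have f2 : 0 ≤ y^3*(5/16-y) := by positivity
    have f3 : 0 ≤ y^5*(5/16-y) := by positivity
    have f4 : 0 ≤ y^6*(5/16-y) := by positivity
    have f5 : 0 ≤ y^8*(5/16-y) := by positivity
    have f6 : 0 ≤ y*(5/16-y)^2 := by positivity
    have f7 : 0 ≤ y^2*(5/16-y)^2 := by positivity
    have f8 : 0 ≤ (y-1/5)^2 := by positivity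
    have f9 : 0 ≤ y*(y-1/4)^2 := by positivity
    have f10 : 0 ≤ y^3 := by positivity
    have f11 : 0 ≤ y^5 := by positivity
    nlinarith

theorem ls_p1 {y : ℝ} (hy : 0 ≤ y) (hy1 : y ≤ 5/16) : 0 ≤ 28/5 - 92/5*y + 94/5*y^2 - 26/5*y^3 - 493/50*y^4 + 183/10*y^5 - 231/25*y^6 := by
    have h' := sub_nonneg.2 hy1
    have f1 : 0 ≤ y^4*(5/16-y) := by positivity
    have f2 : 0 ≤ y^3*(5/16-y) := by positivity
    have f3 : 0 ≤ y^5*(5/16-y) := by positivity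
    have f6 : 0 ≤ y^2*(5/16-y) := by positivity
    have f5 : 0 ≤ (5/16-y)^2 := by positivity
    have f11 : 0 ≤ y^5 := by positivity
    nlinarith

set_option maxHeartbeats 1000000 in
theorem ls_scalM {y μ w : ℝ} (hy : 0 ≤ y) (hy1 : y ≤ 5/16) (hw : w = 1 - 6/5*y)
    (hμ : 0 ≤ μ) (hμ1 : 4*w*μ ≤ 1-y) :
    0 < (1-y)*(3/2+y/2-1/(2*w)-μ) ∧ 
    (2*(1-y)-2*μ*y)^2 ≤ 4 * ((1-y)*(3/2+y/2-1/(2*w)-μ)) * (7/5-6/5*y-2*μ*y^2) := by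
  have h' := sub_nonneg.2 hy1
  have hw0 : 0 < w := by rw [hw]; linarith
  have hr : 1/w ≤ 1+6/5*y+231/100*y^2 := by
    rw [div_le_iff₀ hw0, hw]; nlinarith [mul_nonneg hy h', mul_nonneg (mul_nonneg hy hy) h']
  have hr2 : 1/(2*w) = (1/w)/2 := by field_simp
  rw [hr2]
  have hμ2 : μ ≤ (1-y)*(1+6/5*y+231/100*y^2)/4 := by
    have : μ ≤ (1-y)*(1/w)/4 := by
      rw [mul_one_div, le_div_iff₀ (by norm_num), le_div_iff₀ hw0]; linarith
    have h2 : (1-y)*(1/w) ≤ (1-y)*(1+6/5*y+231/100*y^2) := mul_le_mul_of_nonneg_left hr (by linarith)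
    linarith
  have e1 : 0 ≤ y*(5/16-y) := by positivity
  have e2 : 0 ≤ y^2*(5/16-y) := by positivity
  have hμ3 : μ ≤ 3/10 := by nlinarith
  have hE : (3/2+y/2-(1+6/5*y+231/100*y^2)/2-μ) ≤ (3/2+y/2-1/w/2-μ) := by linarith
  have hE0 : 0 < (3/2+y/2-(1+6/5*y+231/100*y^2)/2-μ) := by nlinarith
  have hZ : 0 ≤ 7/5-6/5*y-2*μ*y^2 := by nlinarith [mul_nonneg hy hy]
  refine ⟨mul_pos (by linarith) (lt_of_lt_of_le hE0 hE), ?_⟩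
  have : 4 * ((1-y)*(3/2+y/2-(1+6/5*y+231/100*y^2)/2-μ)) * (7/5-6/5*y-2*μ*y^2) ≤ 4 * ((1-y)*(3/2+y/2-1/w/2-μ)) * (7/5-6/5*y-2*μ*y^2) := by
    have h1y : 0 ≤ 1 - y := by linarith
    gcongr
  refine le_trans ?_ this
  obtain ⟨d, hd⟩ : ∃ d, μ = (1-y)*(1+6/5*y+231/100*y^2)/4 - d := ⟨(1-y)*(1+6/5*y+231/100*y^2)/4 - μ, by ring⟩
  have hd0 : 0 ≤ d := by linarith
  have hd1 : d ≤ 3/10 := by nlinarith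
  have c0 := ls_p0 hy hy1
  have c1 := ls_p1 hy hy1
  have c2 : 0 ≤ 4*y^2-8*y^3 := by
    have : 0 ≤ y^2*(1-2*y) := mul_nonneg (sq_nonneg y) (by linarith)
    linear_combination 4*this
  have k1 := mul_nonneg hd0 c1
  have k2 := mul_nonneg (mul_nonneg hd0 hd0) c2
  rw [hd]
  linear_combination c0 + k1 + k2

theorem ls_blockM (M : V →ₗ[ℝ] V →ₗ[ℝ] ℝ) (hs : ∀ x y, M x y = M y x) (hp : ∀ x, 0 ≤ M x x)
    (U x α α' : V) {y μ w : ℝ} (hy : 0 ≤ y) (hy1 : y ≤ 5/16) (hw : w = 1 - 6/5*y)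
    (hμ : 0 ≤ μ) (hμ1 : 4*w*μ ≤ 1-y) :
    0 ≤ y*μ * M (U-x) (U-x) - (1-2*y)*(y*μ) * M U U + 2 * M α' α' - (1-2*y)*2 * M α α
      + 2*(1-y) * M (x-α+α') x - (1-y)/(2*w) * M x x - y^2*μ * M (U-α) (U-α)
      + 4*(17/20-13/10*y) * M α α := by
  obtain ⟨hE, hd⟩ := ls_scalM hy hy1 hw hμ hμ1
  set E := (1-y)*(3/2+y/2-1/(2*w)-μ) with hEd
  have hw2 : (1-y)/(2*w) = (1-y)*(3/2+y/2-μ) - E := by rw [hEd]; ring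
  have h1 := mul_nonneg hμ (hp (y • U - x + y • α))
  have h2 := hp ((2:ℝ) • α' + (1-y) • x)
  have h3 := hp ((2*E) • x - (2*(1-y)-2*μ*y) • α)
  have h4 := mul_nonneg (sub_nonneg.2 hd) (hp α)
  have h5 : 0 ≤ E * M x x - (2*(1-y)-2*μ*y) * M x α + (7/5-6/5*y-2*μ*y^2) * M α α := by
    refine nonneg_of_mul_nonneg_right (a := 4*E) ?_ (by linarith)
    simp only [map_add, map_sub, map_smul, LinearMap.add_apply, LinearMap.sub_apply, LinearMap.smul_apply, smul_eq_mul, hs α x] at h3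
    linear_combination h3 + h4
  rw [hw2]
  clear_value E
  simp only [map_add, map_sub, map_smul, LinearMap.add_apply, LinearMap.sub_apply, LinearMap.smul_apply, smul_eq_mul, hs x U, hs α U, hs α x, hs α' x] at h1 h2 h3 h4 ⊢
  linear_combination h1 + h2/2 + h5

/-- The Lyapunov functional. -/
noncomputable def lsU (ι : G →ₗ[ℝ] V) (A M : V →ₗ[ℝ] V →ₗ[ℝ] ℝ) (AΓ MΓ : G →ₗ[ℝ] G →ₗ[ℝ] ℝ)
    (y μ ν : ℝ) (u : V) (q a : G) : ℝ :=
  A u u + y*μ * M u u + AΓ q q + y*ν * MΓ q q + 2 * M (ι a) (ι a) - 3/2*(y*ν) * A (ι q) u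

theorem ls_scalQ {y w : ℝ} (hy : 0 ≤ y) (hy1 : y ≤ 5/16) (hw : w = 1 - 6/5*y) :
    (1-y)^2/((2-y)*w) ≤ 1/2 - 3/20*y := by
  have hw0 : 0 < w := by rw [hw]; linarith
  rw [div_le_iff₀ (mul_pos (by linarith) hw0), hw]
  have h' := sub_nonneg.2 hy1
  nlinarith [mul_nonneg hy h', mul_nonneg (mul_nonneg hy hy) h', mul_nonneg hy hy]

theorem ls_scalν {y w ν : ℝ} (hy : 0 ≤ y) (hy1 : y ≤ 5/16) (hw : w = 1 - 6/5*y) 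
    (hν : 4*w*ν ≤ 2-y) : ν ≤ 1/2+7/20*y+17/25*y^2 := by
  have hw0 : 0 < w := by rw [hw]; linarith
  have h' := sub_nonneg.2 hy1
  have : 2 - y ≤ 4*w*(1/2+7/20*y+17/25*y^2) := by
    rw [hw]
    nlinarith [mul_nonneg hy h', mul_nonneg (mul_nonneg hy hy) h', mul_nonneg hy hy]
  have h4 : 0 < 4*w := by linarith
  exact le_of_mul_le_mul_left (hν.trans this) h4

theorem ls_step (ι : G →ₗ[ℝ] V) (A M : V →ₗ[ℝ] V →ₗ[ℝ] ℝ) (AΓ MΓ : G →ₗ[ℝ] G →ₗ[ℝ] ℝ)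
    (hAs : ∀ x y, A x y = A y x) (hAp : ∀ x, 0 ≤ A x x)
    (hMs : ∀ x y, M x y = M y x) (hMp : ∀ x, 0 ≤ M x x)
    (hAΓs : ∀ x y, AΓ x y = AΓ y x) (hAΓp : ∀ x, 0 ≤ AΓ x x)
    (hMΓs : ∀ x y, MΓ x y = MΓ y x) (hMΓp : ∀ x, 0 ≤ MΓ x x)
    {K B : ℝ} (hK : 0 ≤ K) (hB : 0 ≤ B) (hKB : K + B ≤ 1)
    (hKA : ∀ a, A (ι a) (ι a) ≤ K * MΓ a a) (hKM : ∀ a, 4 * M (ι a) (ι a) ≤ B * MΓ a a)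
    {y μ ν w z : ℝ} (hy : 0 ≤ y) (hy1 : y ≤ 5/16) (hw : w = 1 - 6/5*y) (hz : z * w = y)
    (hμ : 0 ≤ μ) (hμ1 : 4*w*μ ≤ 1-y) (hν : 0 ≤ ν) (hν1 : 4*w*ν ≤ 2-y)
    {lM lG sf sg : ℝ} (hlM : 2*(1-y)*w * lM ≤ y^2*μ) (hlG : (2-y)*w * lG ≤ y^2*ν)
    (U x : V) (a a' q : G) (fx ff ga gg : ℝ)
    (hf : ∀ c : ℝ, 0 ≤ ff - 2*c*fx + c^2 * M x x)
    (hg : ∀ c : ℝ, 0 ≤ gg - 2*c*ga + c^2 * MΓ a a)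
    (hff : ff ≤ sf + z/2 * A (U - ι a) (U - ι a) + lM * M (U - ι a) (U - ι a))
    (hgg : gg ≤ sg + z * AΓ q q + lG * MΓ q q)
    (htest : M (x - ι a + ι a') x + A (U - ι a) x + MΓ a a + AΓ q a = fx + ga) :
    (1-2*y) * lsU ι A M AΓ MΓ y μ ν U q a + (1-2*y)*((1-K-B)*(1+3/8*(K+y*ν))) * MΓ a a
     ≤ lsU ι A M AΓ MΓ y μ ν (U-x) (q-a) a' + 2*(1-y)*w*sf + (2-y)*w*sg := by
  have hw0 : 0 < w := by rw [hw]; linarith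
  have h1y : 0 < 1-y := by linarith
  have h2y : 0 < 2-y := by linarith
  have bA := ls_blockA A hAs hAp U x (ι a) (ι q) y ν hy
  have bM := ls_blockM M hMs hMp U x (ι a) (ι a') hy hy1 hw hμ hμ1
  have bG := hAΓp (a - y • q)
  have l1 := hKA ((2*(1-y)+3/2*(y*ν)) • a - (3/2*(y*ν)) • q)
  have l2 := mul_le_mul_of_nonneg_left (hKA ((1-y) • a - y • q)) 
    (by positivity : 0 ≤ y/4 * (9/4*ν^2))
  have l3 := mul_le_mul_of_nonneg_left (hKA a) (mul_nonneg hy h1y.le)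
  have l4 := mul_le_mul_of_nonneg_left (hKM a) (by linarith : (0:ℝ) ≤ 17/20-13/10*y)
  have f1 := mul_nonneg (mul_pos (mul_pos two_pos h1y) hw0).le (hf (1/(2*w)))
  have g1 := mul_nonneg (mul_pos h2y hw0).le (hg ((1-y)/((2-y)*w)))
  have f1' : 0 ≤ 2*(1-y)*w*ff - 2*(1-y)*fx + (1-y)/(2*w) * M x x := by
    have e : 2*(1-y)*w*ff - 2*(1-y)*fx + (1-y)/(2*w) * M x x = 2*(1-y)*w * (ff - 2*(1/(2*w))*fx + (1/(2*w))^2 * M x x) := by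
      field_simp
    rw [e]; exact f1
  have g1' : 0 ≤ (2-y)*w*gg - 2*(1-y)*ga + (1-y)^2/((2-y)*w) * MΓ a a := by
    have e : (2-y)*w*gg - 2*(1-y)*ga + (1-y)^2/((2-y)*w) * MΓ a a = (2-y)*w * (gg - 2*((1-y)/((2-y)*w))*ga + ((1-y)/((2-y)*w))^2 * MΓ a a) := by
      field_simp
    rw [e]; exact g1
  have qq := mul_le_mul_of_nonneg_right (ls_scalQ hy hy1 hw) (hMΓp a)
  have f2 := mul_le_mul_of_nonneg_left hff (mul_pos (mul_pos two_pos h1y) hw0).le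
  have g2 := mul_le_mul_of_nonneg_left hgg (mul_pos h2y hw0).le
  have f3 := mul_le_mul_of_nonneg_right hlM (hMp (U - ι a))
  have g3 := mul_le_mul_of_nonneg_right hlG (hMΓp q)
  have f4 : 2*(1-y)*w*(z/2 * A (U - ι a) (U - ι a)) = (1-y)*y*A (U - ι a) (U - ι a) := by
    linear_combination (1-y)*A (U - ι a) (U - ι a) * hz
  have g4 : (2-y)*w*(z * AΓ q q) = (2-y)*y*AΓ q q := by
    linear_combination (2-y)*AΓ q q * hz
  have phi := @ls_phi y ν K B (MΓ a a) (y * MΓ a q) (y^2 * MΓ q q) hy hy1 (hMΓp a) (by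
    intro α β
    have := hMΓp (α • a - (β*y) • q)
    simp only [map_sub, map_smul, LinearMap.sub_apply, LinearMap.smul_apply, smul_eq_mul, hMΓs q a] at this
    linear_combination this) hK hB hKB hν (ls_scalν hy hy1 hw hν1)
  unfold lsPhi at phi
  unfold lsU
  generalize (1-y)/(2*w) = c1 at *
  generalize (1-y)^2/((2-y)*w) = c2 at *
  have l1' : A ((2*(1-y)+3/2*(y*ν)) • ι a - (3/2*(y*ν)) • ι q) ((2*(1-y)+3/2*(y*ν)) • ι a - (3/2*(y*ν)) • ι q) ≤ 
     K * ((2*(1-y)+3/2*(y*ν))^2 * MΓ a a - 2*(2*(1-y)+3/2*(y*ν))*(3/2*(y*ν)) * MΓ a q + (3/2*(y*ν))^2*MΓ q q) := by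
    rw [map_sub, map_smul, map_smul] at l1
    refine l1.trans (le_of_eq ?_)
    simp only [map_sub, map_smul, LinearMap.sub_apply, LinearMap.smul_apply, smul_eq_mul, hMΓs q a]
    ring
  have l2' : y/4 * (9/4*ν^2) * A ((1-y) • ι a - y • ι q) ((1-y) • ι a - y • ι q) ≤ 
     y/4 * (9/4*ν^2) * (K * ((1-y)^2 * MΓ a a - 2*(1-y)*y * MΓ a q + y^2*MΓ q q)) := by
    rw [map_sub, map_smul, map_smul] at l2
    refine l2.trans (le_of_eq ?_)
    simp only [map_sub, map_smul, LinearMap.sub_apply, LinearMap.smul_apply, smul_eq_mul, hMΓs q a]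
    ring
  clear l1 l2 hf hg hKA hKM f1 g1
  rw [map_sub ι]
  have eG : MΓ (q-a) (q-a) = MΓ q q - 2 * MΓ a q + MΓ a a := by
    simp only [map_sub, LinearMap.sub_apply, hMΓs q a]; ring
  have eAG : AΓ (q-a) (q-a) = AΓ q q - 2 * AΓ q a + AΓ a a := by
    simp only [map_sub, LinearMap.sub_apply, hAΓs a q]; ring
  have ebG : AΓ (a - y • q) (a - y • q) = AΓ a a - 2*y*AΓ q a + y^2*AΓ q q := by
    simp only [map_sub, map_smul, LinearMap.sub_apply, LinearMap.smul_apply, smul_eq_mul, hAΓs a q]; ring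
  rw [ebG] at bG
  rw [eG, eAG]
  linear_combination bA + bM + bG + 1/4*l1' + l2' + l3 + l4 + f1' + g1' + qq + f2 + g2 + f3 + g3 + phi + 2*(1-y)*htest + f4 + g4

theorem ls_U_nonneg (ι : G →ₗ[ℝ] V) (A M : V →ₗ[ℝ] V →ₗ[ℝ] ℝ) (AΓ MΓ : G →ₗ[ℝ] G →ₗ[ℝ] ℝ)
    (hAs : ∀ x y, A x y = A y x) (hAp : ∀ x, 0 ≤ A x x) (hMp : ∀ x, 0 ≤ M x x)
    (hAΓp : ∀ x, 0 ≤ AΓ x x) (hMΓp : ∀ x, 0 ≤ MΓ x x)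
    {K : ℝ} (hK1 : K ≤ 1) (hKA : ∀ a, A (ι a) (ι a) ≤ K * MΓ a a) 
    {y μ ν : ℝ} (hμ : 0 ≤ y*μ) (hν : 0 ≤ y*ν) (hν1 : y*ν ≤ 1) (u : V) (q a : G) :
    0 ≤ lsU ι A M AΓ MΓ y μ ν u q a := by
  unfold lsU
  generalize y*ν = s at *
  have h1 := hAp (u - (3/4*s) • ι q)
  simp only [map_sub, map_smul, LinearMap.sub_apply, LinearMap.smul_apply, smul_eq_mul, hAs u (ι q)] at h1
  have h2 := mul_le_mul_of_nonneg_left (hKA q) (by positivity : 0 ≤ 9/16*s^2)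
  have h3 := mul_nonneg hμ (hMp u)
  have h4 := hMp (ι a)
  have h5 := hAΓp q
  have h6 : 9/16*s^2*K ≤ s := by
    have : s^2*K ≤ s^2 := mul_le_of_le_one_right (sq_nonneg s) hK1
    nlinarith
  have h7 := mul_le_mul_of_nonneg_right h6 (hMΓp q)
  nlinarith

theorem ls_U_le (ι : G →ₗ[ℝ] V) (A M : V →ₗ[ℝ] V →ₗ[ℝ] ℝ) (AΓ MΓ : G →ₗ[ℝ] G →ₗ[ℝ] ℝ)
    (hAs : ∀ x y, A x y = A y x) (hAp : ∀ x, 0 ≤ A x x) (hMp : ∀ x, 0 ≤ M x x)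
    (hAΓp : ∀ x, 0 ≤ AΓ x x) (hMΓp : ∀ x, 0 ≤ MΓ x x)
    {K : ℝ} (hK : 0 ≤ K) (hKA : ∀ a, A (ι a) (ι a) ≤ K * MΓ a a) 
    {y μ ν : ℝ} (hμ : 0 ≤ y*μ) (hν : 0 ≤ y*ν) (u : V) (q a : G) :
    lsU ι A M AΓ MΓ y μ ν u q a ≤ (1+3/8*(K+y*ν)) * 
      (A u u + y*μ * M u u + AΓ q q + y*ν * MΓ q q + 2 * M (ι a) (ι a)) := by
  unfold lsU
  generalize y*ν = s at *
  have h3 := mul_nonneg hμ (hMp u)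
  have h4 := hMp (ι a)
  have h5 := hAΓp q
  have hT : 0 ≤ K + s := by linarith
  have key : 0 ≤ 3/8*(K+s) * (A u u + s * MΓ q q) + 3/2*s * A (ι q) u := by
    rcases hT.eq_or_lt with h | h
    · have hs : s = 0 := by linarith
      rw [← h, hs]; simp
    · refine nonneg_of_mul_nonneg_right (a := K+s) ?_ h
      have h1 := hAp ((K+s) • u + (2*s) • ι q)
      simp only [map_add, map_smul, LinearMap.add_apply, LinearMap.smul_apply, smul_eq_mul, hAs u (ι q)] at h1
      have h2 := mul_le_mul_of_nonneg_left (hKA q) (by positivity : 0 ≤ 3/2*s^2)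
      have h6 : 0 ≤ 3/8 * s * (K-s)^2 * MΓ q q := by have := hMΓp q; positivity
      linear_combination 3/8*h1 + h2 + h6
  have h7 : 0 ≤ 3/8*(K+s)*(y*μ * M u u + AΓ q q + 2 * M (ι a) (ι a)) := by positivity
  linear_combination key + h7

end lsblocks

theorem ls_seq (U E : ℕ → ℝ) {R θ c S t : ℝ} (hθ : 0 < θ) (hR : 0 < R) (hRθ : 1 ≤ R * θ) (ht : 0 < 1 + t)
    (hS : 0 ≤ S) (hc : 0 ≤ c) (hE : ∀ n, 0 ≤ E n) (hU : ∀ n, 0 ≤ U n)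
    (hR1 : 1 ≤ R)
    (hstep : ∀ n, θ * U (n+1) + θ * (c * (1+t)) * E n ≤ U n + (1+t) * S) (n : ℕ) :
    U n + (1+t) * (c * ∑ k ∈ Finset.range n, E k) ≤ 
      R^n * (U 0 + (1+t) * (S * ∑ k ∈ Finset.range n, (R^k)⁻¹)) := by
  induction n with
  | zero => simp
  | succ n ih =>
    rw [Finset.sum_range_succ, Finset.sum_range_succ]
    have hX : 0 ≤ U (n+1) + (1+t)*(c * E n) := by
      have := hE n; have := hU (n+1); positivity
    have h1 : U (n+1) + (1+t)*(c * E n) ≤ R * (U n + (1+t)*S) := by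
      have h2 := mul_le_mul_of_nonneg_left (hstep n) hR.le
      have h3 := mul_le_mul_of_nonneg_right hRθ hX
      nlinarith
    have hsum : 0 ≤ (1+t) * (c * ∑ k ∈ Finset.range n, E k) := by
      have : 0 ≤ ∑ k ∈ Finset.range n, E k := Finset.sum_nonneg fun k _ => hE k
      positivity
    have h4 := mul_le_mul_of_nonneg_right hR1 hsum
    have h5 := mul_le_mul_of_nonneg_left ih hR.le
    have h6 : R^n * (R^n)⁻¹ = 1 := mul_inv_cancel₀ (by positivity)
    rw [pow_succ]
    linear_combination h1 + h4 + h5 - R*(1+t)*S*h6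

theorem ls_exp {z y w : ℝ} (hz : 0 ≤ z) (hz1 : z ≤ 1/2) (hw : w = 1 - 6/5*y) (hzw : z*w = y) :
    0 ≤ y ∧ y ≤ 5/16 ∧ 1 ≤ Real.exp (2*z) * (1-2*y) := by
  have hy : y * (1+6/5*z) = z := by rw [hw] at hzw; linarith
  have h0 : 0 < 1+6/5*z := by linarith
  have hy' : y = z/(1+6/5*z) := by rw [eq_div_iff h0.ne', hy]
  have hy0 : 0 ≤ y := by rw [hy']; positivity
  have hy1 : y ≤ 5/16 := by rw [hy', div_le_iff₀ h0]; linarith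
  refine ⟨hy0, hy1, ?_⟩
  have he := Real.sum_le_exp_of_nonneg (x := 2*z) (by linarith) 4
  norm_num [Finset.sum_range_succ, Nat.factorial] at he
  have h2 : 0 ≤ 1-2*y := by linarith
  have h3 := mul_le_mul_of_nonneg_right he h2
  refine le_trans ?_ h3
  have h4 : (1-2*y) * (1+6/5*z) = 1 - 4/5*z := by linarith
  refine le_of_mul_le_mul_right ?_ h0
  have h5 := sub_nonneg.2 hz1
  have : 0 ≤ z^2*(1/2-z)*(4/5+16/15*z) := by positivity
  calc 1 * (1+6/5*z) ≤ (1 + 2*z + (2*z)^2/2 + (2*z)^3/6) * (1-4/5*z) := by nlinarith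
    _ = _ := by rw [← h4]; ring

theorem ls_par {z y w κ ρ : ℝ} (hy : 0 ≤ y) (hw : 0 < w) (hzw : z*w = y) (hκ : 0 ≤ κ) (hκ2 : κ ≤ 2)
    (hρ : 0 ≤ ρ) (hρz : ρ ≤ z/2) : 
    ∃ m, 0 ≤ m ∧ κ*w*ρ^2 ≤ y^2*m ∧ 4*w*m ≤ κ ∧ y*m ≤ ρ := by
  rcases hy.eq_or_lt with h | h
  · have hz : z = 0 := by rw [← h] at hzw; rcases mul_eq_zero.1 hzw with h | h; exact h; exact absurd h hw.ne'
    have : ρ = 0 := by linarith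
    exact ⟨0, le_rfl, by rw [this]; simp, by simpa using hκ, by simp [this]⟩
  · have hz : 0 < z := by by_contra hh; push_neg at hh; nlinarith
    refine ⟨κ*w*ρ^2/y^2, by positivity, by field_simp; exact le_rfl, ?_, ?_⟩
    · rw [mul_div_assoc', div_le_iff₀ (by positivity), ← hzw]
      have : ρ^2 ≤ (z/2)^2 := by gcongr
      have := mul_le_mul_of_nonneg_left this (by positivity : 0 ≤ 4*κ*w^2)
      linear_combination this
    · have e : y*(κ*w*ρ^2/y^2) = κ*ρ*ρ/z := by rw [← hzw]; field_simp
      rw [e, div_le_iff₀ hz]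
      nlinarith [mul_nonneg hρ hρ, mul_nonneg hρ (sub_nonneg.2 hρz)]

theorem ls_eta {LA LM : ℝ} : Real.sqrt (2*LM) ≤ etaConst LA LM := by
  unfold etaConst
  split_ifs with h
  · exact le_rfl
  · have := Real.sqrt_nonneg (LA^2-2*LM); linarith

theorem ls_young {n : Type*} [Fintype n] [DecidableEq n] {S : Matrix n n ℝ} (hS : S.PosDef) (f x : n → ℝ) (c : ℝ) :
    0 ≤ vecNormSq S⁻¹ f - 2*c*(x ⬝ᵥ f) + c^2 * (x ⬝ᵥ S *ᵥ x) := by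
  have h := hS.inv.posSemidef.dotProduct_mulVec_nonneg (f - c • (S *ᵥ x))
  have hdet : IsUnit S.det := (Matrix.isUnit_iff_isUnit_det _).1 hS.isUnit
  have hsymm : Sᵀ = S := by simpa using hS.isHermitian.eq
  have e1 : S⁻¹ *ᵥ (S *ᵥ x) = x := by rw [Matrix.mulVec_mulVec, Matrix.nonsing_inv_mul _ hdet, Matrix.one_mulVec]
  have e2 : (S *ᵥ x) ⬝ᵥ (S⁻¹ *ᵥ f) = x ⬝ᵥ f := by
    rw [dotProduct_comm, dotProduct_mulVec, ← mulVec_transpose, hsymm, mulVec_mulVec, Matrix.mul_nonsing_inv _ hdet, one_mulVec, dotProduct_comm]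
  simp only [star_trivial, mulVec_sub, mulVec_smul, e1, sub_dotProduct, dotProduct_sub, smul_dotProduct, dotProduct_smul, e2, smul_eq_mul] at h
  unfold vecNormSq
  rw [dotProduct_comm f x, dotProduct_comm (S *ᵥ x) x] at h
  linear_combination h

theorem ls_test {N₁ N₂ : ℕ}
    (M₁₁ A₁₁ : Matrix (Fin N₁) (Fin N₁) ℝ)
    (M₁₂ A₁₂ : Matrix (Fin N₁) (Fin N₂) ℝ)
    (M₂₁ A₂₁ : Matrix (Fin N₂) (Fin N₁) ℝ)
    (M₂₂ A₂₂ MΓ AΓ : Matrix (Fin N₂) (Fin N₂) ℝ) {τ : ℝ} (hτ : τ ≠ 0)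
    (F F' : Fin N₁ ⊕ Fin N₂ → ℝ) (g g' : Fin N₂ → ℝ)
    (v0 v1 v2 : Fin N₁ → ℝ) (p0 p1 p2 d0 d1 d2 : Fin N₂ → ℝ)
    (h1 : M₁₁ *ᵥ (τ⁻¹ • (v1 - v0)) + A₁₁ *ᵥ v1 = (fun i => F (Sum.inl i)) - M₁₂ *ᵥ d0 - A₁₂ *ᵥ p0)
    (h1' : M₁₁ *ᵥ (τ⁻¹ • (v2 - v1)) + A₁₁ *ᵥ v2 = (fun i => F' (Sum.inl i)) - M₁₂ *ᵥ d1 - A₁₂ *ᵥ p1)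
    (h2 : MΓ *ᵥ d1 + AΓ *ᵥ p1 = g + (fun i => F (Sum.inr i)) - M₂₂ *ᵥ d0 - A₂₂ *ᵥ p0
      - M₂₁ *ᵥ (τ⁻¹ • (v1 - v0)) - A₂₁ *ᵥ v1)
    (h2' : MΓ *ᵥ d2 + AΓ *ᵥ p2 = g' + (fun i => F' (Sum.inr i)) - M₂₂ *ᵥ d1 - A₂₂ *ᵥ p1
      - M₂₁ *ᵥ (τ⁻¹ • (v2 - v1)) - A₂₁ *ᵥ v2)
    (x : Fin N₁ ⊕ Fin N₂ → ℝ) (a : Fin N₂ → ℝ) (ha : a = τ • (d2 - d1))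
    (hx : x = Sum.elim (v2 - v1 - (v1 - v0)) a) :
    x ⬝ᵥ (Matrix.fromBlocks M₁₁ M₁₂ M₂₁ M₂₂) *ᵥ (Sum.elim (v2 - v1 - (v1 - v0)) (τ • (d1 - d0)))
    + x ⬝ᵥ (τ • Matrix.fromBlocks A₁₁ A₁₂ A₂₁ A₂₂) *ᵥ (Sum.elim (v2 - v1) (p1 - p0))
    + a ⬝ᵥ MΓ *ᵥ a + a ⬝ᵥ (τ • AΓ) *ᵥ (p2 - p1) = x ⬝ᵥ (τ • (F' - F)) + a ⬝ᵥ (τ • (g' - g)) := by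
  have E1 : M₁₁ *ᵥ (v2 - v1 - (v1 - v0)) + M₁₂ *ᵥ (τ • (d1 - d0)) + τ • (A₁₁ *ᵥ (v2 - v1) + A₁₂ *ᵥ (p1 - p0))
      = (τ • (F' - F)) ∘ Sum.inl := by
    simp only [mulVec_sub, mulVec_smul] at *
    funext i
    have k1 := congrFun h1 i
    have k2 := congrFun h1' i
    simp only [Pi.add_apply, Pi.sub_apply, Pi.smul_apply, smul_eq_mul, Function.comp] at *
    field_simp at k1 k2
    linear_combination k2 - k1
  have E2 : MΓ *ᵥ a + τ • AΓ *ᵥ (p2 - p1) + M₂₁ *ᵥ (v2 - v1 - (v1 - v0)) + M₂₂ *ᵥ (τ • (d1 - d0)) + τ • (A₂₁ *ᵥ (v2 - v1) + A₂₂ *ᵥ (p1 - p0))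
      = (τ • (F' - F)) ∘ Sum.inr + τ • (g' - g) := by
    rw [ha]
    simp only [mulVec_sub, mulVec_smul] at *
    funext i
    have k1 := congrFun h2 i
    have k2 := congrFun h2' i
    simp only [Pi.add_apply, Pi.sub_apply, Pi.smul_apply, smul_eq_mul, Function.comp] at *
    field_simp at k1 k2
    linear_combination k2 - k1
  have hF : τ • (F' - F) = Sum.elim ((τ • (F' - F)) ∘ Sum.inl) ((τ • (F' - F)) ∘ Sum.inr) := by
    rw [Sum.elim_comp_inl_inr]
  have k1 := congrArg (fun r => (v2 - v1 - (v1 - v0)) ⬝ᵥ r) E1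
  have k2 := congrArg (fun r => a ⬝ᵥ r) E2
  rw [hF, hx]
  simp only [smul_mulVec, fromBlocks_mulVec, Sum.elim_comp_inl, Sum.elim_comp_inr, 
    sumElim_dotProduct_sumElim, dotProduct_add, dotProduct_smul, smul_eq_mul] at *
  linear_combination k1 + k2

set_option maxHeartbeats 4000000

/-- **Stability of the Lie splitting for semi-linear problems (Lemma A.1).** -/
theorem lie_splitting_stability_semilinear
    (N₁ N₂ : ℕ) (hN₁ : 0 < N₁) (hN₂ : 0 < N₂)
    (M₁₁ A₁₁ : Matrix (Fin N₁) (Fin N₁) ℝ)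
    (M₁₂ A₁₂ : Matrix (Fin N₁) (Fin N₂) ℝ)
    (M₂₁ A₂₁ : Matrix (Fin N₂) (Fin N₁) ℝ)
    (M₂₂ A₂₂ MΓ AΓ : Matrix (Fin N₂) (Fin N₂) ℝ)
    (hM : (Matrix.fromBlocks M₁₁ M₁₂ M₂₁ M₂₂).PosDef)
    (hA : (Matrix.fromBlocks A₁₁ A₁₂ A₂₁ A₂₂).PosSemidef)
    (hM21 : M₂₁ = M₁₂ᵀ) (hA21 : A₂₁ = A₁₂ᵀ)
    (hMΓ : MΓ.PosDef) (hAΓ : AΓ.PosSemidef)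
    -- constants
    (τ h cM cinv αΩ : ℝ)
    (hτ : 0 < τ) (hh : 0 < h) (hcM : 0 < cM) (hcinv : 0 < cinv) (hαΩ : 0 ≤ αΩ)
    -- boundary mass estimate and inverse estimate
    (hmass : ∀ z : Fin N₂ → ℝ, vecNormSq M₂₂ z ≤ cM * h * vecNormSq MΓ z)
    (hinv : ∀ z : Fin N₂ → ℝ, vecNormSq A₂₂ z ≤ (αΩ + cinv / h ^ 2) * vecNormSq M₂₂ z)
    -- weak CFL condition
    (hCFL : 7 * cinv * cM * τ < 3 * h)
    -- the semi-linear right-hand sides and their Lipschitz constants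
    (fΩ : ℝ → (Fin N₁ ⊕ Fin N₂ → ℝ) → (Fin N₁ ⊕ Fin N₂ → ℝ))
    (fΓ : ℝ → (Fin N₂ → ℝ) → (Fin N₂ → ℝ))
    (LΩ LA LM LΓ LAΓ LMΓ : ℝ)
    (hLΩ : 0 ≤ LΩ) (hLA : 0 ≤ LA) (hLM : 0 ≤ LM)
    (hLΓ : 0 ≤ LΓ) (hLAΓ : 0 ≤ LAΓ) (hLMΓ : 0 ≤ LMΓ)
    (hLipΩ : ∀ (t t' : ℝ) (u u' : Fin N₁ ⊕ Fin N₂ → ℝ),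
      vecNormSq (Matrix.fromBlocks M₁₁ M₁₂ M₂₁ M₂₂)⁻¹ (fΩ t u - fΩ t' u') ≤
        LΩ * |t - t'| ^ 2
          + LA * vecNormSq (Matrix.fromBlocks A₁₁ A₁₂ A₂₁ A₂₂) (u - u')
          + LM * vecNormSq (Matrix.fromBlocks M₁₁ M₁₂ M₂₁ M₂₂) (u - u'))
    (hLipΓ : ∀ (t t' : ℝ) (q q' : Fin N₂ → ℝ),
      vecNormSq MΓ⁻¹ (fΓ t q - fΓ t' q') ≤
        LΓ * |t - t'| ^ 2 + LAΓ * vecNormSq AΓ (q - q') + LMΓ * vecNormSq MΓ (q - q'))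
    -- step-size restriction 1/(2τ) > C
    (hstep : 1 / (2 * τ) >
      max (max (2 * LA) (Real.sqrt (8 * LM))) (max LAΓ (2 * Real.sqrt LMΓ)))
    -- the discrete sequences
    (u₁ : ℕ → Fin N₁ → ℝ) (p dtp : ℕ → Fin N₂ → ℝ)
    (hdtp : ∀ n : ℕ, dtp (n + 1) = τ⁻¹ • (p (n + 1) - p n))
    -- the semi-linear Lie splitting scheme
    (hscheme₁ : ∀ n : ℕ,
      M₁₁.mulVec (τ⁻¹ • (u₁ (n + 1) - u₁ n)) + A₁₁.mulVec (u₁ (n + 1)) =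
        (fun i => fΩ ((n + 1) * τ) (Sum.elim (u₁ (n + 1)) (p n)) (Sum.inl i))
          - M₁₂.mulVec (dtp n) - A₁₂.mulVec (p n))
    (hscheme₂ : ∀ n : ℕ,
      MΓ.mulVec (dtp (n + 1)) + AΓ.mulVec (p (n + 1)) =
        fΓ ((n + 1) * τ) (p (n + 1))
          + (fun j => fΩ ((n + 1) * τ) (Sum.elim (u₁ (n + 1)) (p n)) (Sum.inr j))
          - M₂₂.mulVec (dtp n) - A₂₂.mulVec (p n)
          - M₂₁.mulVec (τ⁻¹ • (u₁ (n + 1) - u₁ n)) - A₂₁.mulVec (u₁ (n + 1))) :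
    ∀ n : ℕ, 1 ≤ n →
      τ * ∑ k ∈ Finset.Icc 1 n,
          (1 - cM * h * (4 + 4 * τ ^ 2 * LM)
              - ((cM * αΩ) * τ * h + (cM * cinv) * τ / h) * (1 + 4 * τ ^ 2 * LA))
            * vecNormSq MΓ (dtp (k + 1) - dtp k)
      ≤ Real.exp (2 * ((n : ℝ) * τ)
            * max (max (2 * LA) (Real.sqrt (8 * LM))) (max LAΓ (2 * Real.sqrt LMΓ)))
          * (vecNormSq
                (Matrix.fromBlocks A₁₁ A₁₂ A₂₁ A₂₂
                  + etaConst LA LM • Matrix.fromBlocks M₁₁ M₁₂ M₂₁ M₂₂)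
                (Sum.elim (u₁ 1) (p 1) - Sum.elim (u₁ 0) (p 0))
            + vecNormSq (AΓ + etaConst (LAΓ / 2) (LMΓ / 2) • MΓ) (p 1 - p 0)
            + 2 * τ * vecNormSq M₂₂ (dtp 1 - dtp 0)
            + 2 * (LΩ + LΓ) * τ ^ 2 * ∑ k ∈ Finset.range n,
                Real.exp (-(2 * ((k : ℝ) * τ)
                    * max (max (2 * LA) (Real.sqrt (8 * LM)))
                        (max LAΓ (2 * Real.sqrt LMΓ)))) * τ) := by
  intro n _
  have hC1 : 2 * LA ≤ max (max (2 * LA) (Real.sqrt (8 * LM))) (max LAΓ (2 * Real.sqrt LMΓ)) :=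
    le_trans (le_max_left _ _) (le_max_left _ _)
  have hC2 : Real.sqrt (8 * LM) ≤ max (max (2 * LA) (Real.sqrt (8 * LM))) (max LAΓ (2 * Real.sqrt LMΓ)) :=
    le_trans (le_max_right _ _) (le_max_left _ _)
  have hC3 : LAΓ ≤ max (max (2 * LA) (Real.sqrt (8 * LM))) (max LAΓ (2 * Real.sqrt LMΓ)) :=
    le_trans (le_max_left _ _) (le_max_right _ _)
  have hC4 : 2 * Real.sqrt LMΓ ≤ max (max (2 * LA) (Real.sqrt (8 * LM))) (max LAΓ (2 * Real.sqrt LMΓ)) :=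
    le_trans (le_max_right _ _) (le_max_right _ _)
  generalize max (max (2 * LA) (Real.sqrt (8 * LM))) (max LAΓ (2 * Real.sqrt LMΓ)) = C at *
  have hηΩ : Real.sqrt (2 * LM) ≤ etaConst LA LM := ls_eta
  have hηΓ : Real.sqrt LMΓ ≤ etaConst (LAΓ / 2) (LMΓ / 2) := by
    have := ls_eta (LA := LAΓ / 2) (LM := LMΓ / 2)
    rwa [mul_div_cancel₀ _ (two_ne_zero)] at this
  generalize etaConst LA LM = ηΩ at *
  generalize etaConst (LAΓ / 2) (LMΓ / 2) = ηΓ at *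
  have hηΩ0 : 0 ≤ ηΩ := le_trans (Real.sqrt_nonneg _) hηΩ
  have hηΓ0 : 0 ≤ ηΓ := le_trans (Real.sqrt_nonneg _) hηΓ
  have hC0 : 0 ≤ C := by linarith
  -- quadratic forms
  have psd : ∀ {m : Type} [Fintype m] {S : Matrix m m ℝ}, S.PosSemidef → ∀ v, 0 ≤ vecNormSq S v := by
    intro m _ S hS v
    simpa [vecNormSq] using hS.dotProduct_mulVec_nonneg v
  have nadd : ∀ {m : Type} [Fintype m] (S T : Matrix m m ℝ) (c : ℝ) (v : m → ℝ),
      vecNormSq (S + c • T) v = vecNormSq S v + c * vecNormSq T v := by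
    intro m _ S T c v
    simp [vecNormSq, add_mulVec, smul_mulVec, dotProduct_add, dotProduct_smul]
  have nsm : ∀ {m : Type} [Fintype m] (S : Matrix m m ℝ) (c : ℝ) (v : m → ℝ),
      vecNormSq S (c • v) = c ^ 2 * vecNormSq S v := by
    intro m _ S c v
    simp [vecNormSq, mulVec_smul, smul_dotProduct, dotProduct_smul]; ring
  have symf : ∀ {m : Type} [Fintype m] {S : Matrix m m ℝ}, S.IsHermitian → ∀ v w : m → ℝ,
      v ⬝ᵥ S *ᵥ w = w ⬝ᵥ S *ᵥ v := by
    intro m _ S hS v w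
    have hs : Sᵀ = S := by simpa using hS.eq
    rw [dotProduct_comm, dotProduct_mulVec, ← mulVec_transpose, hs, dotProduct_comm,dotProduct_comm]
  have hMi : ∀ a : Fin N₂ → ℝ, vecNormSq (Matrix.fromBlocks M₁₁ M₁₂ M₂₁ M₂₂) (Sum.elim 0 a) = vecNormSq M₂₂ a := by
    intro a
    simp [vecNormSq, fromBlocks_mulVec]
  have hAi : ∀ a : Fin N₂ → ℝ, vecNormSq (Matrix.fromBlocks A₁₁ A₁₂ A₂₁ A₂₂) (Sum.elim 0 a) = vecNormSq A₂₂ a := by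
    intro a
    simp [vecNormSq, fromBlocks_mulVec]
  have htst := fun n => ls_test M₁₁ A₁₁ M₁₂ A₁₂ M₂₁ A₂₁ M₂₂ A₂₂ MΓ AΓ hτ.ne' _ _ _ _ _ _ _ _ _ _ _ _ _
    (hscheme₁ n) (hscheme₁ (n+1)) (hscheme₂ n) (hscheme₂ (n+1)) _ _ rfl rfl
  clear hscheme₁ hscheme₂ hM21 hA21
  have hM22 : ∀ a, 0 ≤ vecNormSq M₂₂ a := fun a => by rw [← hMi]; exact psd hM.posSemidef _
  generalize Matrix.fromBlocks M₁₁ M₁₂ M₂₁ M₂₂ = M at *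
  generalize Matrix.fromBlocks A₁₁ A₁₂ A₂₁ A₂₂ = A at *
  -- scalar parameters
  obtain ⟨z, hz⟩ : ∃ z, z = τ * C := ⟨_, rfl⟩
  have hz0 : 0 ≤ z := by rw [hz]; positivity
  have hz1 : z ≤ 1/2 := by
    rw [gt_iff_lt, lt_div_iff₀ (by positivity)] at hstep
    rw [hz]; linarith
  obtain ⟨w, hw⟩ : ∃ w, w = 1 / (1 + 6/5*z) := ⟨_, rfl⟩
  obtain ⟨y, hy⟩ : ∃ y, y = z / (1 + 6/5*z) := ⟨_, rfl⟩
  have hd : 0 < 1 + 6/5*z := by linarith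
  have hwy : w = 1 - 6/5*y := by rw [hw, hy]; field_simp; ring
  have hzw : z * w = y := by rw [hw, hy]; ring
  have hw0 : 0 < w := by rw [hw]; positivity
  obtain ⟨hy0, hy1, hexp⟩ := ls_exp hz0 hz1 hwy hzw
  have hs2 : Real.sqrt (8 * LM) = 2 * Real.sqrt (2 * LM) := by
    rw [show (8:ℝ) * LM = 2^2 * (2*LM) by ring, Real.sqrt_mul (by norm_num), Real.sqrt_sq (by norm_num)]
  obtain ⟨μ, hμ, hμ2, hμ1, hμ3⟩ := ls_par (κ := 1-y) (ρ := τ * Real.sqrt (2*LM)) hy0 hw0 hzw (by linarith) (by linarith)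
    (by positivity) (by rw [hz]; nlinarith)
  obtain ⟨ν, hν, hν2, hν1, hν3⟩ := ls_par (κ := 2-y) (ρ := τ * Real.sqrt LMΓ) hy0 hw0 hzw (by linarith) (by linarith)
    (by positivity) (by rw [hz]; nlinarith)
  rw [mul_pow, Real.sq_sqrt (by positivity)] at hμ2 hν2
  obtain ⟨K, hK⟩ : ∃ K, K = (cM * αΩ) * τ * h + (cM * cinv) * τ / h := ⟨_, rfl⟩
  rw [← hK]
  have hK0 : 0 ≤ K := by rw [hK]; positivity
  have hco : 1 - cM * h * (4 + 4 * τ ^ 2 * LM) - K * (1 + 4 * τ ^ 2 * LA) ≤ 1 - K - 4 * (cM * h) := by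
    have e1 : 0 ≤ cM * h * (4 * τ ^ 2 * LM) := by positivity
    have e2 : 0 ≤ K * (4 * τ ^ 2 * LA) := by positivity
    nlinarith
  generalize 1 - cM * h * (4 + 4 * τ ^ 2 * LM) - K * (1 + 4 * τ ^ 2 * LA) = co at *
  have hsum : ∀ f : ℕ → ℝ, ∑ k ∈ Finset.Icc 1 n, f k = ∑ k ∈ Finset.range n, f (k+1) := by
    intro f
    rw [Finset.range_eq_Ico, Finset.sum_Ico_add' f 0 n 1, zero_add]; rfl
  rw [hsum, ← Finset.mul_sum]
  have hV0 : 0 ≤ ∑ k ∈ Finset.range n, vecNormSq MΓ (dtp (k + 1 + 1) - dtp (k + 1)) :=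
    Finset.sum_nonneg fun k _ => psd hMΓ.posSemidef _
  refine le_trans (b := τ * ((1 - K - 4 * (cM * h)) * ∑ k ∈ Finset.range n, vecNormSq MΓ (dtp (k + 1 + 1) - dtp (k + 1))))
    (by gcongr) ?_
  have q1 := psd hA (Sum.elim (u₁ 1) (p 1) - Sum.elim (u₁ 0) (p 0))
  have q2 := psd hM.posSemidef (Sum.elim (u₁ 1) (p 1) - Sum.elim (u₁ 0) (p 0))
  have q3 := psd hAΓ (p 1 - p 0)
  have q4 := psd hMΓ.posSemidef (p 1 - p 0)
  have q5 := hM22 (dtp 1 - dtp 0)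
  rw [nadd, nadd]
  rcases lt_or_ge 1 (K + 4 * (cM * h)) with hKB | hKB
  · refine le_trans (b := 0) ?_ (by positivity)
    exact mul_nonpos_of_nonneg_of_nonpos hτ.le (mul_nonpos_of_nonpos_of_nonneg (by linarith) hV0)
  have hKA : ∀ a, τ * vecNormSq A₂₂ a ≤ K * vecNormSq MΓ a := by
    intro a
    have e0 : 0 ≤ αΩ + cinv / h^2 := by positivity
    have e1 := mul_le_mul_of_nonneg_left (hinv a) hτ.le
    have e2 := mul_le_mul_of_nonneg_left (hmass a) (mul_nonneg hτ.le e0)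
    have e3 : K * vecNormSq MΓ a = τ * (αΩ + cinv / h ^ 2) * (cM * h * vecNormSq MΓ a) := by
      rw [hK]; field_simp
    linarith
  let ι : (Fin N₂ → ℝ) →ₗ[ℝ] (Fin N₁ ⊕ Fin N₂ → ℝ) :=
    { toFun := fun a => Sum.elim 0 a
      map_add' := by intro a b; ext (i | i) <;> simp
      map_smul' := by intro a b; ext (i | i) <;> simp }
  have hι : ∀ a : Fin N₂ → ℝ, ι a = (Sum.elim (0 : Fin N₁ → ℝ) a : Fin N₁ ⊕ Fin N₂ → ℝ) := fun _ => rfl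
  clear_value ι
  obtain ⟨bA, hbA⟩ : ∃ b : (Fin N₁ ⊕ Fin N₂ → ℝ) →ₗ[ℝ] (Fin N₁ ⊕ Fin N₂ → ℝ) →ₗ[ℝ] ℝ, ∀ v w, b v w = τ * (v ⬝ᵥ A *ᵥ w) :=
    ⟨Matrix.toLinearMap₂' ℝ (τ • A), fun v w => by rw [Matrix.toLinearMap₂'_apply', smul_mulVec, dotProduct_smul, smul_eq_mul]⟩
  obtain ⟨bM, hbM⟩ : ∃ b : (Fin N₁ ⊕ Fin N₂ → ℝ) →ₗ[ℝ] (Fin N₁ ⊕ Fin N₂ → ℝ) →ₗ[ℝ] ℝ, ∀ v w, b v w = (v ⬝ᵥ M *ᵥ w) :=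
    ⟨Matrix.toLinearMap₂' ℝ M, fun v w => by rw [Matrix.toLinearMap₂'_apply']⟩
  obtain ⟨cA, hcA⟩ : ∃ b : (Fin N₂ → ℝ) →ₗ[ℝ] (Fin N₂ → ℝ) →ₗ[ℝ] ℝ, ∀ v w, b v w = τ * (v ⬝ᵥ AΓ *ᵥ w) :=
    ⟨Matrix.toLinearMap₂' ℝ (τ • AΓ), fun v w => by rw [Matrix.toLinearMap₂'_apply', smul_mulVec, dotProduct_smul, smul_eq_mul]⟩
  obtain ⟨cG, hcG⟩ : ∃ b : (Fin N₂ → ℝ) →ₗ[ℝ] (Fin N₂ → ℝ) →ₗ[ℝ] ℝ, ∀ v w, b v w = (v ⬝ᵥ MΓ *ᵥ w) :=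
    ⟨Matrix.toLinearMap₂' ℝ MΓ, fun v w => by rw [Matrix.toLinearMap₂'_apply']⟩
  have dA : ∀ v, bA v v = τ * vecNormSq A v := fun v => hbA v v
  have dM : ∀ v, bM v v = vecNormSq M v := fun v => hbM v v
  have dcA : ∀ v, cA v v = τ * vecNormSq AΓ v := fun v => hcA v v
  have dcG : ∀ v, cG v v = vecNormSq MΓ v := fun v => hcG v v
  have sA : ∀ v w, bA v w = bA w v := fun v w => by rw [hbA, hbA, symf hA.isHermitian]
  have sM : ∀ v w, bM v w = bM w v := fun v w => by rw [hbM, hbM, symf hM.isHermitian]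
  have scA : ∀ v w, cA v w = cA w v := fun v w => by rw [hcA, hcA, symf hAΓ.isHermitian]
  have scG : ∀ v w, cG v w = cG w v := fun v w => by rw [hcG, hcG, symf hMΓ.isHermitian]
  have pA : ∀ v, 0 ≤ bA v v := fun v => by rw [dA]; exact mul_nonneg hτ.le (psd hA v)
  have pM : ∀ v, 0 ≤ bM v v := fun v => by rw [dM]; exact psd hM.posSemidef v
  have pcA : ∀ v, 0 ≤ cA v v := fun v => by rw [dcA]; exact mul_nonneg hτ.le (psd hAΓ v)
  have pcG : ∀ v, 0 ≤ cG v v := fun v => by rw [dcG]; exact psd hMΓ.posSemidef v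
  have kA : ∀ a, bA (ι a) (ι a) ≤ K * cG a a := fun a => by rw [dA, dcG, hι, hAi]; exact hKA a
  have kM : ∀ a, 4 * bM (ι a) (ι a) ≤ 4 * (cM * h) * cG a a := fun a => by
    rw [dM, dcG, hι, hMi]; have := hmass a; linarith
  have hyμ : 0 ≤ y * μ := by positivity
  have hyν : 0 ≤ y * ν := by positivity
  have hcMh : 0 < cM * h := by positivity
  have hyν1 : y * ν ≤ 1 := by
    have : y * ν ≤ z / 2 := by rw [hz]; nlinarith
    linarith
  have ht : 0 < 1 + 3/8*(K + y*ν) := by positivity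
  have hE := ls_seq (fun n => lsU ι bA bM cA cG y μ ν (Sum.elim (u₁ (n+1)) (p (n+1)) - Sum.elim (u₁ n) (p n)) (p (n+1) - p n) (τ • (dtp (n+1) - dtp n)))
    (fun n => cG (τ • (dtp (n+1+1) - dtp (n+1))) (τ • (dtp (n+1+1) - dtp (n+1))))
    (R := Real.exp (2*z)) (θ := 1-2*y) (c := 1 - K - 4 * (cM * h)) (S := 2 * (LΩ + LΓ) * τ^4) (t := 3/8*(K + y*ν))
    (by linarith) (Real.exp_pos _) hexp ht (by positivity) (by linarith) (fun n => pcG _)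
    (fun n => ls_U_nonneg ι bA bM cA cG sA pA pM pcA pcG (by linarith) kA hyμ hyν hyν1 _ _ _)
    (Real.one_le_exp (by positivity)) ?_ n
  · have hU0 := ls_U_nonneg ι bA bM cA cG sA pA pM pcA pcG (by linarith) kA hyμ hyν hyν1 (Sum.elim (u₁ (n+1)) (p (n+1)) - Sum.elim (u₁ n) (p n)) (p (n+1) - p n) (τ • (dtp (n+1) - dtp n))
    have hU1 := ls_U_le ι bA bM cA cG sA pA pM pcA pcG hK0 kA hyμ hyν (Sum.elim (u₁ 1) (p 1) - Sum.elim (u₁ 0) (p 0)) (p 1 - p 0) (τ • (dtp 1 - dtp 0))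
    simp only [dcG, nsm, ← Finset.mul_sum, zero_add] at hE
    rw [dA, dM, dcA, dcG, dM, hι, hMi, nsm] at hU1
    have x1 : Real.exp (2 * ((n:ℝ) * τ) * C) = Real.exp (2*z)^n := by
      rw [← Real.exp_nat_mul, hz]; congr 1; ring
    have x2 : ∀ k : ℕ, Real.exp (-(2 * ((k:ℝ) * τ) * C)) = (Real.exp (2*z)^k)⁻¹ := by
      intro k
      rw [← Real.exp_nat_mul, ← Real.exp_neg, hz]; congr 1; ring
    simp only [x1, x2, ← Finset.sum_mul]
    have hR : 0 < Real.exp (2*z)^n := by positivity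
    generalize Real.exp (2*z)^n = Rn at *
    generalize ∑ k ∈ Finset.range n, (Real.exp (2*z)^k)⁻¹ = Sg at *
    generalize ∑ k ∈ Finset.range n, vecNormSq MΓ (dtp (k + 1 + 1) - dtp (k + 1)) = Sv at *
    generalize lsU ι bA bM cA cG y μ ν (Sum.elim (u₁ (n+1)) (p (n+1)) - Sum.elim (u₁ n) (p n)) (p (n+1) - p n) (τ • (dtp (n+1) - dtp n)) = Un at *
    generalize lsU ι bA bM cA cG y μ ν (Sum.elim (u₁ 1) (p 1) - Sum.elim (u₁ 0) (p 0)) (p 1 - p 0) (τ • (dtp 1 - dtp 0)) = U0 at *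
    generalize vecNormSq A (Sum.elim (u₁ 1) (p 1) - Sum.elim (u₁ 0) (p 0)) = Q1 at *
    generalize vecNormSq M (Sum.elim (u₁ 1) (p 1) - Sum.elim (u₁ 0) (p 0)) = Q2 at *
    generalize vecNormSq AΓ (p 1 - p 0) = Q3 at *
    generalize vecNormSq MΓ (p 1 - p 0) = Q4 at *
    generalize vecNormSq M₂₂ (dtp 1 - dtp 0) = Q5 at *
    have m1 : y*μ*Q2 ≤ τ * ηΩ * Q2 :=
      mul_le_mul_of_nonneg_right (hμ3.trans (mul_le_mul_of_nonneg_left hηΩ hτ.le)) q2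
    have m2 : y*ν*Q4 ≤ τ * ηΓ * Q4 :=
      mul_le_mul_of_nonneg_right (hν3.trans (mul_le_mul_of_nonneg_left hηΓ hτ.le)) q4
    generalize 1 + 3/8*(K+y*ν) = T at *
    have m3 : U0 ≤ T * (τ * (Q1 + ηΩ * Q2 + (Q3 + ηΓ * Q4) + 2 * τ * Q5)) := by
      refine hU1.trans (mul_le_mul_of_nonneg_left ?_ ht.le)
      linear_combination m1 + m2
    have m4 := mul_le_mul_of_nonneg_left m3 hR.le
    refine le_of_mul_le_mul_left ?_ (mul_pos ht hτ)
    linear_combination hE + m4 + hU0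
  · intro n
    have hp2 : p (n+1+1) - p (n+1) - τ • (dtp (n+1+1) - dtp (n+1)) = p (n+1) - p n := by
      rw [hdtp (n+1), hdtp n, smul_sub, smul_smul, smul_smul, mul_inv_cancel₀ hτ.ne', one_smul, one_smul]
      abel
    obtain ⟨f, hf⟩ : ∃ f, f = τ • (fΩ ((((n+1:ℕ):ℝ) + 1) * τ) (Sum.elim (u₁ (n+1+1)) (p (n+1))) - fΩ (((n:ℝ) + 1) * τ) (Sum.elim (u₁ (n+1)) (p n))) := ⟨_, rfl⟩
    obtain ⟨g, hg⟩ : ∃ g, g = τ • (fΓ ((((n+1:ℕ):ℝ) + 1) * τ) (p (n+1+1)) - fΓ (((n:ℝ) + 1) * τ) (p (n+1))) := ⟨_, rfl⟩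
    have hUa : Sum.elim (u₁ (n+1+1)) (p (n+1+1)) - Sum.elim (u₁ (n+1)) (p (n+1)) - ι (τ • (dtp (n+1+1) - dtp (n+1)))
        = Sum.elim (u₁ (n+1+1) - u₁ (n+1)) (p (n+1) - p n) := by
      rw [hι]
      funext i
      rcases i with i | i
      · simp
      · simpa using congrFun hp2 i
    have hUb : Sum.elim (u₁ (n+1+1)) (p (n+1)) - Sum.elim (u₁ (n+1)) (p n)
        = Sum.elim (u₁ (n+1+1) - u₁ (n+1)) (p (n+1) - p n) := by
      funext i
      rcases i with i | i <;> simp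
    have hxa : Sum.elim (u₁ (n+1+1) - u₁ (n+1) - (u₁ (n+1) - u₁ n)) (τ • (dtp (n+1+1) - dtp (n+1))) - ι (τ • (dtp (n+1+1) - dtp (n+1)))
        + ι (τ • (dtp (n+1) - dtp n)) = Sum.elim (u₁ (n+1+1) - u₁ (n+1) - (u₁ (n+1) - u₁ n)) (τ • (dtp (n+1) - dtp n)) := by
      rw [hι, hι]
      funext i
      rcases i with i | i <;> simp
    have htt : |(((n+1:ℕ):ℝ) + 1) * τ - ((n:ℝ) + 1) * τ| ^ 2 = τ^2 := by
      rw [sq_abs]; push_cast; ring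
    have hs := ls_step ι bA bM cA cG sA pA sM pM scA pcA scG pcG hK0 (by positivity : 0 ≤ 4 * (cM * h)) hKB kA kM
      hy0 hy1 hwy hzw hμ hμ1 hν hν1 (lM := τ^2 * LM) (lG := τ^2 * LMΓ) (sf := LΩ * τ^4) (sg := LΓ * τ^4)
      (by linear_combination hμ2) (by linear_combination hν2)
      (Sum.elim (u₁ (n+1+1)) (p (n+1+1)) - Sum.elim (u₁ (n+1)) (p (n+1)))
      (Sum.elim (u₁ (n+1+1) - u₁ (n+1) - (u₁ (n+1) - u₁ n)) (τ • (dtp (n+1+1) - dtp (n+1))))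
      (τ • (dtp (n+1+1) - dtp (n+1))) (τ • (dtp (n+1) - dtp n)) (p (n+1+1) - p (n+1))
      _ (vecNormSq M⁻¹ f) _ (vecNormSq MΓ⁻¹ g) (fun c => by rw [hbM]; exact ls_young hM f _ c)
      (fun c => by rw [hcG]; exact ls_young hMΓ g _ c) ?_ ?_ ?_
    · have eU : Sum.elim (u₁ (n+1+1)) (p (n+1+1)) - Sum.elim (u₁ (n+1)) (p (n+1)) - 
        Sum.elim (u₁ (n+1+1) - u₁ (n+1) - (u₁ (n+1) - u₁ n)) (τ • (dtp (n+1+1) - dtp (n+1)))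
        = Sum.elim (u₁ (n+1)) (p (n+1)) - Sum.elim (u₁ n) (p n) := by
        funext i
        rcases i with i | i
        · simp
        · simpa using congrFun hp2 i
      rw [eU, hp2] at hs
      have hsf : 0 ≤ LΩ * τ^4 := by positivity
      have hsg : 0 ≤ LΓ * τ^4 := by positivity
      have r1 : 2*(1-y)*w ≤ 2 := by nlinarith
      have r2 : (2-y)*w ≤ 2 := by nlinarith
      have r3 := mul_le_mul_of_nonneg_right r1 hsf
      have r4 := mul_le_mul_of_nonneg_right r2 hsg
      have r5 : 0 ≤ 3/8*(K + y*ν) * (2 * (LΩ + LΓ) * τ^4) := by positivity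
      refine le_trans hs ?_
      linear_combination r3 + r4 + r5
    · rw [hUa, hf, nsm, dA, dM]
      have h1 := mul_le_mul_of_nonneg_left (hLipΩ ((((n+1:ℕ):ℝ) + 1) * τ) (((n:ℝ) + 1) * τ) (Sum.elim (u₁ (n+1+1)) (p (n+1))) (Sum.elim (u₁ (n+1)) (p n))) (sq_nonneg τ)
      rw [hUb, htt] at h1
      have h2 : τ * (τ * LA) ≤ z/2 * τ := by rw [hz]; nlinarith
      have h3 := mul_le_mul_of_nonneg_right h2 (psd hA (Sum.elim (u₁ (n+1+1) - u₁ (n+1)) (p (n+1) - p n)))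
      linear_combination h1 + h3
    · rw [hg, nsm, dcA, dcG]
      have h1 := mul_le_mul_of_nonneg_left (hLipΓ ((((n+1:ℕ):ℝ) + 1) * τ) (((n:ℝ) + 1) * τ) (p (n+1+1)) (p (n+1))) (sq_nonneg τ)
      rw [htt] at h1
      have h2 : τ * (τ * LAΓ) ≤ z * τ := by rw [hz]; nlinarith
      have h3 := mul_le_mul_of_nonneg_right h2 (psd hAΓ (p (n+1+1) - p (n+1)))
      linear_combination h1 + h3
    · rw [hUa, hxa, sM, sA, scA, hbM, hbA, hcA, hcG, hf, hg]
      have h1 := htst n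
      rw [smul_mulVec, smul_mulVec, dotProduct_smul, dotProduct_smul, smul_eq_mul, smul_eq_mul] at h1
      exact h1
end

section
/- Lower bound on the angles of a quasi-uniform triangle (from the proof of Lemma 3.1, case d = 2): Let ϑ ≥ 2 be a real number and let α₁, α₂, α₃ be positive real numbers with α₁ + α₂ + α₃ = π. If cos α₁ + cos α₂ + cos α₃ ≥ 1 + 1/ϑ, then for each i = 1, 2, 3 one has α_i ≥ 2·arcsin( 1/2 − (1/2)·√(1 − 2/ϑ) ). -/
open Real

theorem angle_aux (ϑ a b c : ℝ) (ha : 0 < a) (hb : 0 < b) (hc : 0 < c)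
    (hsum : a + b + c = Real.pi)
    (hcos : 1 + 1 / ϑ ≤ Real.cos a + Real.cos b + Real.cos c) :
    2 * Real.arcsin (1 / 2 - (1 / 2) * Real.sqrt (1 - 2 / ϑ)) ≤ a := by
  have hs : 0 < Real.sin (a / 2) := Real.sin_pos_of_pos_of_lt_pi (by linarith) (by linarith)
  have h1 : Real.cos a = 1 - 2 * Real.sin (a / 2) ^ 2 := by
    have h := Real.cos_two_mul (a / 2)
    have h' := Real.sin_sq_add_cos_sq (a / 2)
    rw [show 2 * (a / 2) = a by ring] at h
    linarith
  have h2 : Real.cos b + Real.cos c = 2 * Real.sin (a / 2) * Real.cos ((b - c) / 2) := by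
    rw [Real.cos_add_cos, show (b + c) / 2 = Real.pi / 2 - a / 2 by linarith,
      Real.cos_pi_div_two_sub]
  have h3 := Real.cos_le_one ((b - c) / 2)
  have h4 : Real.sin (a / 2) * Real.cos ((b - c) / 2) ≤ Real.sin (a / 2) :=
    mul_le_of_le_one_right hs.le h3
  have h5 : 1 - 2 * Real.sin (a / 2) ≤ Real.sqrt (1 - 2 / ϑ) := by
    apply Real.le_sqrt_of_sq_le
    have : 2 / ϑ = 2 * (1 / ϑ) := by ring
    rw [this]
    nlinarith
  have h6 := Real.monotone_arcsin
    (show 1 / 2 - (1 / 2) * Real.sqrt (1 - 2 / ϑ) ≤ Real.sin (a / 2) by linarith)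
  rw [Real.arcsin_sin (by linarith) (by linarith)] at h6
  linarith

/-- **Lower bound on the angles of a quasi-uniform triangle**
(from the proof of Lemma 3.1, case `d = 2`). If the angles `α₁, α₂, α₃` of a triangle
satisfy `cos α₁ + cos α₂ + cos α₃ ≥ 1 + 1/ϑ` with `ϑ ≥ 2`, then every angle is bounded
from below by `2 arcsin(1/2 − (1/2)√(1 − 2/ϑ))`. -/
theorem quasi_uniform_angle_lower_bound
    (ϑ : ℝ) (hϑ : 2 ≤ ϑ)
    (α₁ α₂ α₃ : ℝ) (h₁ : 0 < α₁) (h₂ : 0 < α₂) (h₃ : 0 < α₃)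
    (hsum : α₁ + α₂ + α₃ = Real.pi)
    (hcos : 1 + 1 / ϑ ≤ Real.cos α₁ + Real.cos α₂ + Real.cos α₃) :
    2 * Real.arcsin (1 / 2 - (1 / 2) * Real.sqrt (1 - 2 / ϑ)) ≤ α₁ ∧
    2 * Real.arcsin (1 / 2 - (1 / 2) * Real.sqrt (1 - 2 / ϑ)) ≤ α₂ ∧
    2 * Real.arcsin (1 / 2 - (1 / 2) * Real.sqrt (1 - 2 / ϑ)) ≤ α₃ := by
  exact ⟨angle_aux ϑ α₁ α₂ α₃ h₁ h₂ h₃ hsum hcos,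
    angle_aux ϑ α₂ α₁ α₃ h₂ h₁ h₃ (by linarith) (by linarith),
    angle_aux ϑ α₃ α₁ α₂ h₃ h₁ h₂ (by linarith) (by linarith)⟩
end
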